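/- arXiv:0710.3991 — 3 statements merged into one kernel-verified Lean document; each statement's English description precedes it below -/
import Mathlib

section
/- Let F ⊂ Sym²(ℝⁿ) be a Dirichlet set with Dirichlet dual F̃, and let K ⊂ ℝⁿ be compact. Suppose u : K → [−∞, ∞) is upper semicontinuous with its restriction to Int K of type F, and v : K → (−∞, ∞] is lower semicontinuous with the restriction of −v to Int K of type F̃. If u ≤ v on ∂K, then u ≤ v on all of K. -/
open Set Metric Filter MeasureTheory Asymptotics
open scoped Topology BigOperators RealInnerProductSpace

noncomputable section

abbrev Euc (n : ℕ) : Type := EuclideanSpace ℝ (Fin n)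

abbrev SymMat (n : ℕ) : Type := ↥(selfAdjoint (Matrix (Fin n) (Fin n) ℝ))

/-- `u` is subaffine on `X`. -/
def SubaffineOn {n : ℕ} (X : Set (Euc n)) (u : Euc n → EReal) : Prop :=
  ∀ K : Set (Euc n), IsCompact K → K ⊆ X →
    ∀ a : Euc n →ᵃ[ℝ] ℝ,
      (∀ x ∈ frontier K, u x ≤ (a x : EReal)) → ∀ x ∈ K, u x ≤ (a x : EReal)

/-- The Hessian matrix of `u` at `x`. -/
def hessMat {n : ℕ} (u : Euc n → ℝ) (x : Euc n) : Matrix (Fin n) (Fin n) ℝ :=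
  fun i j => iteratedFDeriv ℝ 2 u x ![EuclideanSpace.single i 1, EuclideanSpace.single j 1]

structure IsDirichletSet {n : ℕ} (F : Set (SymMat n)) : Prop where
  nonempty : F.Nonempty
  ne_univ : F ≠ Set.univ
  isClosed : IsClosed F
  add_psd : ∀ A ∈ F, ∀ P : SymMat n, (P : Matrix (Fin n) (Fin n) ℝ).PosSemidef → A + P ∈ F

/-- The Dirichlet dual `F̃ = −(∼ Int F)`. -/
def dirDual {n : ℕ} (F : Set (SymMat n)) : Set (SymMat n) := {A | -A ∉ interior F}

/-- A C² function `v` on `X` is of type `F`. -/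
def IsTypeFC2 {n : ℕ} (F : Set (SymMat n)) (X : Set (Euc n)) (v : Euc n → ℝ) : Prop :=
  ContDiffOn ℝ 2 v X ∧ ∀ x ∈ X, ∃ A ∈ F, (A : Matrix (Fin n) (Fin n) ℝ) = hessMat v x

/-- An u.s.c. function `u` is of type `F` on `X`. -/
def IsTypeF {n : ℕ} (F : Set (SymMat n)) (X : Set (Euc n)) (u : Euc n → EReal) : Prop :=
  ∀ v : Euc n → ℝ, IsTypeFC2 (dirDual F) X v → SubaffineOn X (fun x => u x + (v x : EReal))

/-- The ray set `F⃗` of `F`. -/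
def raySet {n : ℕ} (F : Set (SymMat n)) : Set (SymMat n) :=
  closure {A : SymMat n | ∃ t₀ : ℝ, ∀ t : ℝ, t₀ ≤ t → t • A ∈ F}

/-- The bilinear form `⟨A v, w⟩` of a matrix. -/
def bilin {n : ℕ} (A : Matrix (Fin n) (Fin n) ℝ) (v w : Euc n) : ℝ :=
  ∑ i, ∑ j, A i j * v i * w j

/-- `A` is not negative definite. -/
def NotNegDef {n : ℕ} (A : SymMat n) : Prop :=
  ¬ (-(A : Matrix (Fin n) (Fin n) ℝ)).PosDef

def IsLocalDefiningFn {n : ℕ} (Ω U : Set (Euc n)) (ρ : Euc n → ℝ) : Prop :=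
  IsOpen U ∧ ContDiffOn ℝ (⊤ : ℕ∞) ρ U ∧ Ω ∩ U = {y ∈ U | ρ y < 0} ∧ ∀ y ∈ U, fderiv ℝ ρ y ≠ 0

def HasSmoothBoundary {n : ℕ} (Ω : Set (Euc n)) : Prop :=
  ∀ x ∈ frontier Ω, ∃ U ρ, x ∈ U ∧ IsLocalDefiningFn Ω U ρ

/-- `∂Ω` is strictly `G`-convex at `x`. -/
def StrictlyConvexAt {n : ℕ} (G : Set (SymMat n)) (Ω : Set (Euc n)) (x : Euc n) : Prop :=
  ∃ U ρ, x ∈ U ∧ IsLocalDefiningFn Ω U ρ ∧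
    ∃ B ∈ interior G, ∀ v w : Euc n, fderiv ℝ ρ x v = 0 → fderiv ℝ ρ x w = 0 →
      bilin (hessMat ρ x) v w = bilin (B : Matrix (Fin n) (Fin n) ℝ) v w

def symOne (n : ℕ) : SymMat n := ⟨1, selfAdjoint.mem_iff.mpr (IsSelfAdjoint.one _)⟩

/-- `u` is twice differentiable at `x` with Hessian `A`. -/
def TwiceDiffWithHessAt {n : ℕ} (u : Euc n → ℝ) (x : Euc n)
    (A : Matrix (Fin n) (Fin n) ℝ) : Prop :=
  ∃ p : Euc n, (fun h : Euc n => u (x + h) - u x - ⟪p, h⟫ - 1/2 * bilin A h h)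
      =o[𝓝 (0 : Euc n)] fun h => ‖h‖ ^ 2

/-!
Truncating `u` and `-v` from below makes them real-valued without changing them where their sum is
positive, so suppose that `u - v` is positive somewhere in `K`. The sup-convolutions of `u` and
`-v` with a steep paraboloid `-m‖x‖²` become convex after adding `m‖x‖²`, while near-maxima of
their sum still come from interior points of `K`. Subtract `2m‖x - ξ‖²` from the sum of the two
convex functions: the maximum point moves with `ξ`, and there a `C^{1,1}` function is squeezed
between one summand and the paraboloid minus the other. For generic `ξ` its gradient is
differentiable at that point by Rademacher's theorem, giving upper Hessians of the sup-convolutions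
that add up to zero (Jensen's lemma). Transported back, and after a perturbation of `u` by a small
multiple of `‖x‖² - R²`, they become upper Hessians `A - δ` of `u` and `-A` of `-v`. Testing against
quadratic polynomials, type `F` forces `A - δ ∈ F`, hence `A ∈ Int F` by positivity of `F`, whereas
type `F̃` forces `-A ∈ F̃`, that is, `A ∉ Int F`.
-/

section UpperHessian

variable {E : Type*} [NormedAddCommGroup E] [InnerProductSpace ℝ E]
  {f g : E → ℝ} {A B : E →L[ℝ] E} {x : E}

/-- `A` is the quadratic part of an element of the second order superjet of `f` at `x`: up to
`o(‖z - x‖²)`, `f` lies below a quadratic function agreeing with it at `x` whose Hessian form is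
`⟪A ·, ·⟫`. The operator `A` is not required to be symmetric. -/
def HasUpperHessianAt (f : E → ℝ) (A : E →L[ℝ] E) (x : E) : Prop :=
  ∃ p : E, ∀ η > 0, ∀ᶠ z in 𝓝 x,
    f z ≤ f x + ⟪p, z - x⟫ + 1 / 2 * ⟪A (z - x), z - x⟫ + η * ‖z - x‖ ^ 2

namespace HasUpperHessianAt

theorem add (hf : HasUpperHessianAt f A x) (hg : HasUpperHessianAt g B x) :
    HasUpperHessianAt (fun z => f z + g z) (A + B) x := by
  obtain ⟨p, hp⟩ := hf
  obtain ⟨q, hq⟩ := hg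
  refine ⟨p + q, fun η hη => ?_⟩
  filter_upwards [hp (η / 2) (half_pos hη), hq (η / 2) (half_pos hη)] with z hfz hgz
  rw [inner_add_left, add_apply, inner_add_left]
  linarith

theorem of_le_translate {y : E} {c : ℝ} (hf : HasUpperHessianAt f A x)
    (hle : ∀ᶠ z in 𝓝 y, g z ≤ f (z - y + x) + c) (heq : g y = f x + c) :
    HasUpperHessianAt g A y := by
  obtain ⟨p, hp⟩ := hf
  have htranslate : Tendsto (fun z => z - y + x) (𝓝 y) (𝓝 x) := by
    have : Continuous fun z : E => z - y + x := by fun_prop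
    simpa using this.tendsto y
  refine ⟨p, fun η hη => ?_⟩
  filter_upwards [hle, htranslate.eventually (hp η hη)] with z hz hfz
  rw [add_sub_cancel_right] at hfz
  linarith

theorem mono (hf : HasUpperHessianAt f A x) (hle : ∀ z, g z ≤ f z) (heq : g x = f x) :
    HasUpperHessianAt g A x :=
  hf.of_le_translate (c := 0) (Eventually.of_forall fun z => by simpa using hle z)
    (by simpa using heq)

end HasUpperHessianAt

theorem hasUpperHessianAt_add_mul_norm_sub_sq (c m : ℝ) (ξ x : E) :
    HasUpperHessianAt (fun z => c + m * ‖z - ξ‖ ^ 2) ((2 * m) • .id ℝ E) x := by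
  refine ⟨(2 * m) • (x - ξ), fun η hη => Eventually.of_forall fun z => ?_⟩
  have hsplit : ‖z - ξ‖ ^ 2 = ‖x - ξ‖ ^ 2 + 2 * ⟪x - ξ, z - x⟫ + ‖z - x‖ ^ 2 := by
    rw [← norm_add_sq_real, sub_add_sub_cancel']
  simp only [hsplit, smul_apply, ContinuousLinearMap.id_apply,
    real_inner_smul_left, real_inner_self_eq_norm_sq]
  linarith [mul_nonneg hη.le (sq_nonneg ‖z - x‖)]

variable [CompleteSpace E]

theorem hasDerivAt_comp_segment {Y : E → E} (hg : ∀ z, HasGradientAt g (Y z) z) (x k : E) (t : ℝ) :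
    HasDerivAt (fun t : ℝ => g (x + t • k)) ⟪Y (x + t • k), k⟫ t := by
  have hsegment : HasDerivAt (fun t : ℝ => x + t • k) k t := by
    simpa using ((hasDerivAt_id t).smul_const k).const_add x
  simpa [Function.comp_def] using (hg (x + t • k)).hasFDerivAt.comp_hasDerivAt t hsegment

theorem hasUpperHessianAt_of_hasFDerivAt_gradient {Y : E → E}
    (hg : ∀ z, HasGradientAt g (Y z) z) (hY : HasFDerivAt Y A x) :
    HasUpperHessianAt g A x := by
  refine ⟨Y x, fun η hη => ?_⟩
  obtain ⟨ρ, hρ, hYA⟩ := Metric.eventually_nhds_iff_ball.1 (hY.isLittleO.bound hη)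
  refine Metric.eventually_nhds_iff_ball.2 ⟨ρ, hρ, fun z hz => ?_⟩
  obtain ⟨k, rfl⟩ : ∃ k, z = x + k := ⟨z - x, by simp⟩
  rw [mem_ball_iff_norm, add_sub_cancel_left] at hz
  let e : ℝ → ℝ := fun t => g (x + t • k) - t * ⟪Y x, k⟫ - t ^ 2 * (1 / 2 * ⟪A k, k⟫)
  have hderiv (t : ℝ) : HasDerivAt e ⟪Y (x + t • k) - Y x - A (t • k), k⟫ t := by
    refine (((hasDerivAt_comp_segment hg x k t).sub ((hasDerivAt_id t).mul_const ⟪Y x, k⟫)).sub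
      (((hasDerivAt_id t).pow 2).mul_const (1 / 2 * ⟪A k, k⟫))).congr_deriv ?_
    simp [inner_sub_left, real_inner_smul_left]
    ring
  have hderiv_le (t : ℝ) (ht : t ∈ Ico (0 : ℝ) 1) :
      ‖⟪Y (x + t • k) - Y x - A (t • k), k⟫‖ ≤ η * ‖k‖ ^ 2 := by
    have htk : ‖t • k‖ ≤ ‖k‖ := by
      rw [norm_smul, Real.norm_of_nonneg ht.1]
      exact mul_le_of_le_one_left (norm_nonneg k) ht.2.le
    have hgrad := hYA (x + t • k) (by simpa using htk.trans_lt hz)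
    rw [add_sub_cancel_left] at hgrad
    calc ‖⟪Y (x + t • k) - Y x - A (t • k), k⟫‖
        ≤ ‖Y (x + t • k) - Y x - A (t • k)‖ * ‖k‖ := norm_inner_le_norm _ _
      _ ≤ η * ‖k‖ * ‖k‖ := by gcongr; exact hgrad.trans (by gcongr)
      _ = η * ‖k‖ ^ 2 := by ring
  have hmean := le_of_abs_le <| norm_image_sub_le_of_norm_deriv_le_segment_01'
    (fun t _ => (hderiv t).hasDerivWithinAt) hderiv_le
  simp only [e, one_smul, zero_smul, add_zero, one_pow, one_mul, zero_mul, sub_zero, ne_eq,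
    OfNat.ofNat_ne_zero, not_false_eq_true, zero_pow] at hmean
  rw [add_sub_cancel_left]
  linarith

end UpperHessian

section Squeezed

variable {E : Type*} [NormedAddCommGroup E] [InnerProductSpace ℝ E] {m : ℝ} {f : E → ℝ}

/-- At `x`, `f` lies above the affine function of slope `q` through `(x, f x)`, and below its sum
with the paraboloid `m‖z - x‖²`. This is the `C^{1,1}` condition on a convex function. -/
def IsSqueezed (m : ℝ) (f : E → ℝ) (x q : E) : Prop :=
  ∀ z, f x + ⟪q, z - x⟫ ≤ f z ∧ f z ≤ f x + ⟪q, z - x⟫ + m * ‖z - x‖ ^ 2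

theorem isSqueezed_of_convexOn_of_le (hf : ConvexOn ℝ univ f) {x q : E}
    (hle : ∀ z, f z ≤ f x + ⟪q, z - x⟫ + m * ‖z - x‖ ^ 2) : IsSqueezed m f x q := by
  refine fun z => ⟨?_, hle z⟩
  have hsegment : ∀ t : ℝ, 0 < t → f x + ⟪q, z - x⟫ ≤ f z + t * (m * ‖z - x‖ ^ 2) := by
    intro t ht
    have hx : (t / (1 + t)) • z + (1 / (1 + t)) • (x - t • (z - x)) = x := by
      match_scalars <;> field_simp <;> ring
    have hconv := hf.2 (mem_univ z) (mem_univ (x - t • (z - x)))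
      (by positivity : 0 ≤ t / (1 + t)) (by positivity : 0 ≤ 1 / (1 + t)) (by field_simp; ring)
    rw [hx, smul_eq_mul, smul_eq_mul] at hconv
    have hback := hle (x - t • (z - x))
    rw [sub_sub_cancel_left, inner_neg_right, real_inner_smul_right, norm_neg, norm_smul,
      Real.norm_of_nonneg ht.le] at hback
    have hconv' : (1 + t) * f x ≤ t * f z + f (x - t • (z - x)) := by
      have := mul_le_mul_of_nonneg_left hconv (by positivity : 0 ≤ 1 + t)
      field_simp at this
      linarith
    nlinarith
  have hlim : Tendsto (fun t : ℝ => f z + t * (m * ‖z - x‖ ^ 2)) (𝓝[>] 0) (𝓝 (f z)) := by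
    have : Continuous fun t : ℝ => f z + t * (m * ‖z - x‖ ^ 2) := by fun_prop
    simpa using this.continuousWithinAt.tendsto (x := (0 : ℝ)) (s := Ioi 0)
  exact ge_of_tendsto hlim (eventually_mem_nhdsWithin.mono hsegment)

theorem isSqueezed_of_isMaxOn_sub_sq (hf : ConvexOn ℝ univ f) {x ξ : E}
    (hmax : IsMaxOn (fun z => f z - m * ‖z - ξ‖ ^ 2) univ x) :
    IsSqueezed m f x ((2 * m) • (x - ξ)) := by
  refine isSqueezed_of_convexOn_of_le hf fun z => ?_
  have hz := hmax (mem_univ z)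
  have hsplit : ‖z - ξ‖ ^ 2 = ‖x - ξ‖ ^ 2 + 2 * ⟪x - ξ, z - x⟫ + ‖z - x‖ ^ 2 := by
    rw [← norm_add_sq_real, sub_add_sub_cancel']
  simp only [mem_ofPred_eq, hsplit] at hz
  rw [real_inner_smul_left]
  linarith

namespace IsSqueezed

variable {x x' q q' : E}

theorem norm_slope_sub_le (hm : 0 < m) (h : IsSqueezed m f x q) (h' : IsSqueezed m f x' q') :
    ‖q' - q‖ ≤ 4 * m * ‖x' - x‖ := by
  have hcompare : ⟪q' - q, (1 / (2 * m)) • (q' - q) - (x' - x)⟫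
      ≤ m * ‖(1 / (2 * m)) • (q' - q)‖ ^ 2 := by
    set d := (1 / (2 * m)) • (q' - q)
    have hupper := (h (x + d)).2
    have hlower := (h' (x + d)).1
    have hx' := (h x').1
    rw [add_sub_cancel_left] at hupper
    rw [show x + d - x' = d - (x' - x) by abel] at hlower
    simp only [inner_sub_left, inner_sub_right] at *
    linarith
  rw [inner_sub_right, real_inner_smul_right, real_inner_self_eq_norm_sq, norm_smul, mul_pow,
    Real.norm_of_nonneg (by positivity)] at hcompare
  have hcauchy := real_inner_le_norm (q' - q) (x' - x)
  have hsq : ‖q' - q‖ * ‖q' - q‖ ≤ ‖q' - q‖ * (4 * m * ‖x' - x‖) := by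
    field_simp at hcompare
    nlinarith
  rcases (norm_nonneg (q' - q)).eq_or_lt with hzero | hpos
  · rw [← hzero]; positivity
  · exact le_of_mul_le_mul_left hsq hpos

theorem hasGradientAt [CompleteSpace E] (h : IsSqueezed m f x q) : HasGradientAt f q x := by
  rw [hasGradientAt_iff_isLittleO]
  refine (IsBigO.of_bound m (g := fun z => ‖z - x‖ ^ 2) ?_).trans_isLittleO ?_
  · filter_upwards with z
    rw [Real.norm_eq_abs, norm_pow, norm_norm, abs_le]
    constructor <;> linarith [(h z).1, (h z).2, (h z).1.trans (h z).2]
  · exact isLittleO_pow_sub_sub x one_lt_two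

theorem antilipschitzWith {X : E → E} (hm : 0 < m)
    (hX : ∀ ξ, IsSqueezed m f (X ξ) ((2 * m) • (X ξ - ξ))) : AntilipschitzWith 3 X := by
  refine AntilipschitzWith.of_le_mul_dist fun ξ ζ => ?_
  have hslope := (hX ζ).norm_slope_sub_le hm (hX ξ)
  rw [← smul_sub, norm_smul, Real.norm_of_nonneg (by positivity)] at hslope
  have hdiff : ‖X ξ - ξ - (X ζ - ζ)‖ ≤ 2 * ‖X ξ - X ζ‖ := by
    refine le_of_mul_le_mul_left (hslope.trans_eq ?_) (by positivity : 0 < 2 * m)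
    ring
  rw [dist_eq_norm, dist_eq_norm]
  calc ‖ξ - ζ‖ = ‖(X ξ - X ζ) - (X ξ - ξ - (X ζ - ζ))‖ := by congr 1; abel
    _ ≤ ‖X ξ - X ζ‖ + ‖X ξ - ξ - (X ζ - ζ)‖ := norm_sub_le _ _
    _ ≤ _ := by push_cast; linarith

end IsSqueezed

end Squeezed

section Envelopes

theorem convexOn_univ_of_forall_exists_minorant {E : Type*} [AddCommGroup E] [Module ℝ E]
    {f : E → ℝ}
    (h : ∀ x, ∃ φ : E → ℝ, ConvexOn ℝ univ φ ∧ φ x = f x ∧ ∀ z, φ z ≤ f z) :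
    ConvexOn ℝ univ f := by
  refine ⟨convex_univ, fun x _ y _ a b ha hb hab => ?_⟩
  obtain ⟨φ, hφ, heq, hle⟩ := h (a • x + b • y)
  calc f (a • x + b • y) = φ (a • x + b • y) := heq.symm
    _ ≤ a • φ x + b • φ y := hφ.2 (mem_univ x) (mem_univ y) ha hb hab
    _ ≤ a • f x + b • f y := by gcongr <;> exact hle _

theorem lipschitzWith_of_forall_exists_minorant {α : Type*} [PseudoMetricSpace α] {f : α → ℝ}
    {L : NNReal} (h : ∀ x, ∃ φ : α → ℝ, LipschitzWith L φ ∧ φ x = f x ∧ ∀ z, φ z ≤ f z) :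
    LipschitzWith L f := by
  refine LipschitzWith.of_le_add_mul L fun x y => ?_
  obtain ⟨φ, hφ, heq, hle⟩ := h x
  linarith [hφ.le_add_mul x y, hle y]

variable {E : Type*} [NormedAddCommGroup E] {s K : Set E} {m : ℝ}
  {u f : E → ℝ} {L : NNReal} {x : E}

/-- The sup-convolution of `u : s → ℝ` with the paraboloid `-m‖·‖²`. It is meaningful only when
the supremum is finite, a junk value of `sSup` otherwise. -/
def supConv (s : Set E) (m : ℝ) (u : E → ℝ) (x : E) : ℝ :=
  sSup ((fun y => u y - m * ‖y - x‖ ^ 2) '' s)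

theorem isGreatest_supConv_of_isMaxOn {y : E} (hy : y ∈ s)
    (hmax : IsMaxOn (fun y => u y - m * ‖y - x‖ ^ 2) s y) :
    IsGreatest ((fun y => u y - m * ‖y - x‖ ^ 2) '' s) (supConv s m u x) := by
  have hgreatest : IsGreatest ((fun y => u y - m * ‖y - x‖ ^ 2) '' s) (u y - m * ‖y - x‖ ^ 2) :=
    ⟨mem_image_of_mem _ hy, forall_mem_image.2 hmax⟩
  rwa [supConv, hgreatest.csSup_eq]

theorem isGreatest_supConv_of_isCompact (hK : IsCompact K) (hne : K.Nonempty)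
    (hu : UpperSemicontinuousOn u K) (m : ℝ) (x : E) :
    IsGreatest ((fun y => u y - m * ‖y - x‖ ^ 2) '' K) (supConv K m u x) := by
  have hpenalty : UpperSemicontinuousOn (fun y => -(m * ‖y - x‖ ^ 2)) K :=
    (by fun_prop : Continuous fun y => -(m * ‖y - x‖ ^ 2)).continuousOn.upperSemicontinuousOn
  obtain ⟨y, hy, hmax⟩ := (hu.add hpenalty).exists_isMaxOn hne hK
  exact isGreatest_supConv_of_isMaxOn hy (by simpa only [← sub_eq_add_neg] using hmax)

variable [ProperSpace E]

theorem exists_isMaxOn_sub_sq (hf : LipschitzWith L f) (hm : 0 < m) (x : E) :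
    ∃ y, IsMaxOn (fun y => f y - m * ‖y - x‖ ^ 2) univ y := by
  have hcont : Continuous fun y => f y - m * ‖y - x‖ ^ 2 := by
    have := hf.continuous
    fun_prop
  obtain ⟨y, hy⟩ := hcont.exists_forall_ge' x <| by
    filter_upwards [(isCompact_closedBall x (L / m)).compl_mem_cocompact] with z hz
    have hfar : L ≤ m * ‖z - x‖ := by
      rw [mem_compl_iff, mem_closedBall_iff_norm, not_le, div_lt_iff₀' hm] at hz
      exact hz.le
    have hlip := hf.le_add_mul z x
    rw [dist_eq_norm] at hlip
    rw [sub_self, norm_zero]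
    nlinarith [norm_nonneg (z - x)]
  exact ⟨y, fun z _ => hy z⟩

theorem isGreatest_supConv_univ (hf : LipschitzWith L f) (hm : 0 < m) (x : E) :
    IsGreatest ((fun y => f y - m * ‖y - x‖ ^ 2) '' univ) (supConv univ m f x) :=
  let ⟨y, hy⟩ := exists_isMaxOn_sub_sq hf hm x
  isGreatest_supConv_of_isMaxOn (mem_univ y) hy

theorem exists_translate_minorant_supConv (hf : LipschitzWith L f) (hm : 0 < m) (x : E) :
    ∃ (a : E) (b : ℝ), f (x + a) - b = supConv univ m f x ∧
      ∀ z, f (z + a) - b ≤ supConv univ m f z := by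
  have hgreatest := isGreatest_supConv_univ hf hm
  obtain ⟨y, -, heq⟩ := (hgreatest x).1
  refine ⟨y - x, m * ‖y - x‖ ^ 2, by rw [← heq, add_sub_cancel], fun z => ?_⟩
  simpa using (hgreatest z).2 (mem_image_of_mem _ (mem_univ (z + (y - x))))

theorem lipschitzWith_supConv_univ (hf : LipschitzWith L f) (hm : 0 < m) :
    LipschitzWith L (supConv univ m f) := by
  refine lipschitzWith_of_forall_exists_minorant fun x => ?_
  obtain ⟨a, b, heq, hle⟩ := exists_translate_minorant_supConv hf hm x
  refine ⟨_, LipschitzWith.of_dist_le_mul fun z w => ?_, heq, hle⟩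
  rw [dist_sub_right, ← dist_add_right z w a]
  exact hf.dist_le_mul _ _

/-- The infimum of the paraboloids `c + m‖· - ξ‖²` lying above `f`: since the least admissible
`c` for the vertex `ξ` is `supConv univ m f ξ`, this is an inf-convolution of the
sup-convolution of `f` (a Lasry-Lions regularization with equal parameters). -/
def paraboloidHull (m : ℝ) (f : E → ℝ) (x : E) : ℝ :=
  -supConv univ m (-supConv univ m f) x

theorem exists_paraboloidHull_eq (hf : LipschitzWith L f) (hm : 0 < m) (x : E) :
    ∃ ξ, paraboloidHull m f x = supConv univ m f ξ + m * ‖x - ξ‖ ^ 2 := by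
  obtain ⟨ξ, -, hξ⟩ := (isGreatest_supConv_univ (lipschitzWith_supConv_univ hf hm).neg hm x).1
  refine ⟨ξ, ?_⟩
  simp only [paraboloidHull, ← hξ, norm_sub_rev x, Pi.neg_apply]
  ring

theorem paraboloidHull_le (hf : LipschitzWith L f) (hm : 0 < m) (x ξ : E) :
    paraboloidHull m f x ≤ supConv univ m f ξ + m * ‖x - ξ‖ ^ 2 := by
  have := (isGreatest_supConv_univ (lipschitzWith_supConv_univ hf hm).neg hm x).2
    (mem_image_of_mem _ (mem_univ ξ))
  rw [Pi.neg_apply, norm_sub_rev] at this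
  rw [paraboloidHull]
  linarith

theorem le_paraboloidHull (hf : LipschitzWith L f) (hm : 0 < m) (x : E) :
    f x ≤ paraboloidHull m f x := by
  obtain ⟨ξ, hξ⟩ := exists_paraboloidHull_eq hf hm x
  have := (isGreatest_supConv_univ hf hm ξ).2 (mem_image_of_mem _ (mem_univ x))
  linarith

theorem paraboloidHull_le_of_le (hf : LipschitzWith L f) (hm : 0 < m) {c : ℝ} {ξ : E}
    (hle : ∀ z, f z ≤ c + m * ‖z - ξ‖ ^ 2) (x : E) :
    paraboloidHull m f x ≤ c + m * ‖x - ξ‖ ^ 2 := by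
  obtain ⟨y, -, hy⟩ := (isGreatest_supConv_univ hf hm ξ).1
  linarith [paraboloidHull_le hf hm x ξ, hle y]

variable [NormedSpace ℝ E]

theorem convexOn_supConv_univ (hconv : ConvexOn ℝ univ f) (hf : LipschitzWith L f) (hm : 0 < m) :
    ConvexOn ℝ univ (supConv univ m f) := by
  refine convexOn_univ_of_forall_exists_minorant fun x => ?_
  obtain ⟨a, b, heq, hle⟩ := exists_translate_minorant_supConv hf hm x
  exact ⟨_, (hconv.translate_left a).add_const (-b), heq, hle⟩

theorem convexOn_paraboloidHull (hconv : ConvexOn ℝ univ f) (hf : LipschitzWith L f)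
    (hm : 0 < m) : ConvexOn ℝ univ (paraboloidHull m f) := by
  refine ⟨convex_univ, fun x _ y _ a b ha hb hab => ?_⟩
  obtain ⟨ξ, hξ⟩ := exists_paraboloidHull_eq hf hm x
  obtain ⟨ζ, hζ⟩ := exists_paraboloidHull_eq hf hm y
  have hsup := (convexOn_supConv_univ hconv hf hm).2 (mem_univ ξ) (mem_univ ζ) ha hb hab
  have hsq := ((convexOn_norm convex_univ).pow (fun _ _ => norm_nonneg _) 2).2
    (mem_univ (x - ξ)) (mem_univ (y - ζ)) ha hb hab
  simp only [Pi.pow_apply, smul_eq_mul] at hsup hsq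
  calc paraboloidHull m f (a • x + b • y)
      ≤ supConv univ m f (a • ξ + b • ζ) + m * ‖a • (x - ξ) + b • (y - ζ)‖ ^ 2 := by
        rw [show a • (x - ξ) + b • (y - ζ) = a • x + b • y - (a • ξ + b • ζ) by module]
        exact paraboloidHull_le hf hm _ _
    _ ≤ a * supConv univ m f ξ + b * supConv univ m f ζ
        + m * (a * ‖x - ξ‖ ^ 2 + b * ‖y - ζ‖ ^ 2) := by gcongr
    _ = a • paraboloidHull m f x + b • paraboloidHull m f y := by
        rw [hξ, hζ, smul_eq_mul, smul_eq_mul]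
        ring

end Envelopes

section EuclideanEnvelopes

variable {E : Type*} [NormedAddCommGroup E] [InnerProductSpace ℝ E] {K : Set E} {m : ℝ}
  {u f h : E → ℝ} {L : NNReal}

theorem exists_affine_minorant_supConv_add_sq (hK : IsCompact K) (hne : K.Nonempty)
    (hu : UpperSemicontinuousOn u K) (m : ℝ) (x : E) :
    ∃ y ∈ K, ⟪(2 * m) • y, x⟫ + (u y - m * ‖y‖ ^ 2) = supConv K m u x + m * ‖x‖ ^ 2 ∧
      ∀ z, ⟪(2 * m) • y, z⟫ + (u y - m * ‖y‖ ^ 2) ≤ supConv K m u z + m * ‖z‖ ^ 2 := by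
  have hexpand (y z : E) : ⟪(2 * m) • y, z⟫ + (u y - m * ‖y‖ ^ 2) =
      u y - m * ‖y - z‖ ^ 2 + m * ‖z‖ ^ 2 := by
    rw [norm_sub_sq_real, real_inner_smul_left]
    ring
  have hgreatest := isGreatest_supConv_of_isCompact hK hne hu m
  obtain ⟨y, hy, heq⟩ := (hgreatest x).1
  refine ⟨y, hy, by rw [hexpand, ← heq], fun z => ?_⟩
  rw [hexpand]
  gcongr
  exact (hgreatest z).2 (mem_image_of_mem _ hy)

theorem convexOn_supConv_add_sq (hK : IsCompact K) (hne : K.Nonempty)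
    (hu : UpperSemicontinuousOn u K) (m : ℝ) :
    ConvexOn ℝ univ fun x => supConv K m u x + m * ‖x‖ ^ 2 := by
  refine convexOn_univ_of_forall_exists_minorant fun x => ?_
  obtain ⟨y, -, heq, hle⟩ := exists_affine_minorant_supConv_add_sq hK hne hu m x
  exact ⟨_, ((innerSL ℝ ((2 * m) • y)).toLinearMap.convexOn convex_univ).add_const _, heq, hle⟩

theorem exists_lipschitzWith_supConv_add_sq (hK : IsCompact K) (hne : K.Nonempty)
    (hu : UpperSemicontinuousOn u K) (m : ℝ) :
    ∃ L, LipschitzWith L fun x => supConv K m u x + m * ‖x‖ ^ 2 := by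
  obtain ⟨R, hR⟩ := hK.isBounded.exists_norm_le
  refine ⟨(|2 * m| * R).toNNReal, lipschitzWith_of_forall_exists_minorant fun x => ?_⟩
  obtain ⟨y, hy, heq, hle⟩ := exists_affine_minorant_supConv_add_sq hK hne hu m x
  refine ⟨_, LipschitzWith.of_dist_le_mul fun z w => ?_, heq, hle⟩
  rw [dist_add_right, dist_eq_norm, ← inner_sub_right, dist_eq_norm]
  calc ‖⟪(2 * m) • y, z - w⟫‖ ≤ ‖(2 * m) • y‖ * ‖z - w‖ := norm_inner_le_norm _ _
    _ ≤ |2 * m| * R * ‖z - w‖ := by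
      rw [norm_smul, Real.norm_eq_abs]
      gcongr
      exact hR y hy
    _ ≤ _ := by gcongr; exact Real.le_coe_toNNReal _

variable [ProperSpace E]

theorem exists_isSqueezed_paraboloidHull (hconv : ConvexOn ℝ univ f) (hf : LipschitzWith L f)
    (hm : 0 < m) (x : E) : ∃ q, IsSqueezed m (paraboloidHull m f) x q := by
  obtain ⟨ξ, hξ⟩ := exists_paraboloidHull_eq hf hm x
  refine ⟨_, isSqueezed_of_isMaxOn_sub_sq (convexOn_paraboloidHull hconv hf hm) (ξ := ξ)
    fun z _ => ?_⟩
  simpa only [hξ, mem_ofPred_eq, add_sub_cancel_right, sub_le_iff_le_add]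
    using paraboloidHull_le hf hm z ξ

theorem exists_affine_minorant_of_lt (hh : ConvexOn ℝ univ h) (hc : Continuous h) {x : E} {a : ℝ}
    (ha : a < h x) : ∃ (q : E) (b : ℝ), ⟪q, x⟫ + b = a ∧ ∀ z, ⟪q, z⟫ + b ≤ h z := by
  obtain ⟨l, b, hle, heq⟩ := hh.exists_affine_le_of_lt (𝕜 := ℝ) (mem_univ x) ha isClosed_univ
    (hc.lowerSemicontinuous.lowerSemicontinuousOn _)
  refine ⟨(InnerProductSpace.toDual ℝ E).symm l, b, ?_, fun z => ?_⟩
  · simpa using heq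
  · simpa using hle ⟨z, mem_univ z⟩

theorem paraboloidHull_add_le (hf : LipschitzWith L f) (hm : 0 < m) (hh : ConvexOn ℝ univ h)
    (hc : Continuous h) {c : ℝ} {ξ : E} (hle : ∀ z, f z + h z ≤ c + m * ‖z - ξ‖ ^ 2) (x : E) :
    paraboloidHull m f x + h x ≤ c + m * ‖x - ξ‖ ^ 2 := by
  suffices hlt : ∀ a < h x, a ≤ c + m * ‖x - ξ‖ ^ 2 - paraboloidHull m f x by
    linarith [le_of_forall_lt_imp_le_of_dense hlt]
  intro a ha
  obtain ⟨q, b, hqx, hq⟩ := exists_affine_minorant_of_lt hh hc ha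
  -- Subtracting an affine function from a paraboloid only moves its vertex.
  have hvertex (z : E) : c + m * ‖z - ξ‖ ^ 2 - (⟪q, z⟫ + b) =
      c - b - ⟪q, ξ⟫ - ‖q‖ ^ 2 / (4 * m) + m * ‖z - (ξ + (1 / (2 * m)) • q)‖ ^ 2 := by
    rw [← sub_sub z, norm_sub_sq_real (z - ξ), real_inner_smul_right, norm_smul, mul_pow,
      Real.norm_of_nonneg (by positivity), real_inner_comm q, inner_sub_right]
    field_simp
    ring
  have hhull := paraboloidHull_le_of_le hf hm (fun z => (hvertex z).le.trans' (by
    linarith [hle z, hq z])) x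
  rw [← hvertex] at hhull
  linarith

theorem exists_lipschitzWith_gradient_paraboloidHull (hconv : ConvexOn ℝ univ f)
    (hf : LipschitzWith L f) (hm : 0 < m) :
    ∃ (Y : E → E) (C : NNReal), LipschitzWith C Y ∧
      ∀ x, HasGradientAt (paraboloidHull m f) (Y x) x := by
  choose Y hY using exists_isSqueezed_paraboloidHull hconv hf hm
  refine ⟨Y, (4 * m).toNNReal, LipschitzWith.of_dist_le_mul fun x z => ?_,
    fun x => (hY x).hasGradientAt⟩
  rw [dist_eq_norm, dist_eq_norm, Real.coe_toNNReal _ (by positivity)]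
  exact (hY z).norm_slope_sub_le hm (hY x)

end EuclideanEnvelopes

section Jensen

variable {E : Type*} [NormedAddCommGroup E] [InnerProductSpace ℝ E] [FiniteDimensional ℝ E]

/- Rademacher's theorem on the image of `X`: an antilipschitz map cannot send a ball, which has
positive Haar measure, into the null set where `Y` is not differentiable. -/
theorem exists_mem_ball_differentiableAt [MeasurableSpace E] [BorelSpace E]
    {F : Type*} [NormedAddCommGroup F] [NormedSpace ℝ F] [FiniteDimensional ℝ F]
    {X : E → E} {Y : E → F} {C D : NNReal} (hX : AntilipschitzWith C X)
    (hY : LipschitzWith D Y) (ξ : E) {r : ℝ} (hr : 0 < r) :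
    ∃ ζ ∈ ball ξ r, DifferentiableAt ℝ Y (X ζ) := by
  let μ : Measure E := μH[Module.finrank ℝ E]
  have hnull : μ {x | ¬ DifferentiableAt ℝ Y x} = 0 := ae_iff.1 hY.ae_differentiableAt
  have hpreimage : μ (X ⁻¹' {x | ¬ DifferentiableAt ℝ Y x}) = 0 := by
    have := hX.hausdorffMeasure_preimage_le (d := Module.finrank ℝ E) (Nat.cast_nonneg _)
      {x | ¬ DifferentiableAt ℝ Y x}
    rwa [hnull, mul_zero, nonpos_iff_eq_zero] at this
  by_contra! hball
  exact (measure_ball_pos μ ξ hr).ne' (measure_mono_null hball hpreimage)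

variable {f h : E → ℝ} {L M : NNReal} {m r : ℝ}

/- `f` and `c + m‖· - ξ‖² - h` touch at the maximum point, and the `C^{1,1}` function
`paraboloidHull m f` lies between them for every `ξ`. Hence it suffices that its gradient be
differentiable at the maximum point, which holds for almost every `ξ`. -/
theorem exists_isMaxOn_hasUpperHessianAt (hf : ConvexOn ℝ univ f) (hfL : LipschitzWith L f)
    (hh : ConvexOn ℝ univ h) (hhL : LipschitzWith M h) (hm : 0 < m) (hr : 0 < r) :
    ∃ ξ ∈ ball (0 : E) r, ∃ x, IsMaxOn (fun z => f z + h z - m * ‖z - ξ‖ ^ 2) univ x ∧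
      ∃ A, HasUpperHessianAt f A x ∧ HasUpperHessianAt h ((2 * m) • .id ℝ E + -A) x := by
  borelize E
  choose X hX using exists_isMaxOn_sub_sq (hfL.add hhL) hm
  have hXanti : AntilipschitzWith 3 X := IsSqueezed.antilipschitzWith hm fun ξ =>
    isSqueezed_of_isMaxOn_sub_sq (hf.add hh) (hX ξ)
  obtain ⟨Y, C, hYlip, hY⟩ := exists_lipschitzWith_gradient_paraboloidHull hf hfL hm
  obtain ⟨ξ, hξ, hdiff⟩ := exists_mem_ball_differentiableAt hXanti hYlip 0 hr
  obtain ⟨A, hA⟩ := hdiff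
  let g := paraboloidHull m f
  let c := f (X ξ) + h (X ξ) - m * ‖X ξ - ξ‖ ^ 2
  have hfg (z : E) : f z ≤ g z := le_paraboloidHull hfL hm z
  have hgh (z : E) : g z + h z ≤ c + m * ‖z - ξ‖ ^ 2 :=
    paraboloidHull_add_le hfL hm hh hhL.continuous
      (fun z => sub_le_iff_le_add.1 (hX ξ (mem_univ z))) z
  have hghξ : g (X ξ) = f (X ξ) := le_antisymm (by linarith [hgh (X ξ)]) (hfg _)
  have hgA : HasUpperHessianAt g A (X ξ) := hasUpperHessianAt_of_hasFDerivAt_gradient hY hA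
  have hgA' : HasUpperHessianAt (fun z => -g z) (-A) (X ξ) :=
    hasUpperHessianAt_of_hasFDerivAt_gradient (Y := -Y) (fun z => by
      simpa [hasGradientAt_iff_hasFDerivAt] using (hY z).hasFDerivAt.fun_neg) hA.neg
  refine ⟨ξ, hξ, X ξ, hX ξ, A, hgA.mono hfg hghξ.symm,
    ((hasUpperHessianAt_add_mul_norm_sub_sq c m ξ (X ξ)).add hgA').mono
      (fun z => by linarith [hgh z]) ?_⟩
  simp only [hghξ, c]
  ring

end Jensen

section TheoremOnSums

theorem exists_penalty_forall_mem_interior {α : Type*} [MetricSpace α] {K : Set α}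
    (hK : IsCompact K) {u w : α → ℝ} (hu : UpperSemicontinuousOn u K)
    (hw : UpperSemicontinuousOn w K) {M : ℝ} (hbd : ∀ x ∈ frontier K, u x + w x < M) :
    ∃ m > 0, ∀ y ∈ K, ∀ z ∈ K, M + m * dist y z ^ 2 ≤ u y + w z →
      y ∈ interior K ∧ z ∈ interior K := by
  have hsum : UpperSemicontinuousOn (fun p : α × α => u p.1 + w p.2) (K ×ˢ K) :=
    (hu.comp continuousOn_fst fun p hp => hp.1).add
      (hw.comp continuousOn_snd fun p hp => hp.2)
  let C : Set (α × α) :=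
    (K ×ˢ K ∩ (fun p => u p.1 + w p.2) ⁻¹' Ici M) \ interior K ×ˢ interior K
  have hC : IsCompact C := (hsum.isCompact_inter_preimage_Ici (hK.prod hK) M).diff
    (isOpen_interior.prod isOpen_interior)
  have hoffDiag : ∀ p ∈ C, 0 < dist p.1 p.2 := by
    rintro ⟨y, z⟩ ⟨⟨hy, hM⟩, hint⟩
    refine dist_pos.2 fun hyz : y = z => ?_
    subst hyz
    exact (hbd y ⟨subset_closure hy.1, fun h => hint ⟨h, h⟩⟩).not_ge hM
  obtain ⟨d, hd, hdC⟩ := hC.exists_forall_le' continuous_dist.continuousOn hoffDiag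
  obtain ⟨B, hB⟩ := hsum.bddAbove_of_isCompact (hK.prod hK)
  refine ⟨(|B - M| + 1) / d ^ 2, by positivity, fun y hy z hz hyz => ?_⟩
  by_contra hint
  have hmem : (y, z) ∈ C := by
    refine ⟨⟨⟨hy, hz⟩, le_trans ?_ hyz⟩, hint⟩
    exact le_add_of_nonneg_right (by positivity)
  have hBle : u y + w z ≤ B := hB (mem_image_of_mem _ (mk_mem_prod hy hz))
  have hlarge : |B - M| + 1 ≤ (|B - M| + 1) / d ^ 2 * dist y z ^ 2 := by
    rw [div_mul_eq_mul_div, le_div_iff₀ (by positivity)]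
    gcongr
    exact hdC _ hmem
  linarith [le_abs_self (B - M)]

variable {E : Type*} [NormedAddCommGroup E] [InnerProductSpace ℝ E] {K : Set E} {u w : E → ℝ}

/- Known as the magic property of sup-convolutions. -/
theorem HasUpperHessianAt.of_supConv {m : ℝ} {A : E →L[ℝ] E} {x y : E}
    (hgreatest : ∀ x, IsGreatest ((fun y => u y - m * ‖y - x‖ ^ 2) '' K) (supConv K m u x))
    (hA : HasUpperHessianAt (supConv K m u) A x) (hy : y ∈ interior K)
    (hyx : u y - m * ‖y - x‖ ^ 2 = supConv K m u x) : HasUpperHessianAt u A y := by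
  refine hA.of_le_translate (c := m * ‖y - x‖ ^ 2) ?_ (by linarith)
  filter_upwards [mem_interior_iff_mem_nhds.1 hy] with z hz
  have := (hgreatest (z - y + x)).2 (mem_image_of_mem _ hz)
  rw [show z - (z - y + x) = y - x by abel] at this
  linarith

theorem HasUpperHessianAt.of_add_sq {m : ℝ} {A : E →L[ℝ] E} {x : E}
    (h : HasUpperHessianAt (fun z => u z + m * ‖z‖ ^ 2) A x) :
    HasUpperHessianAt u (A - (2 * m) • .id ℝ E) x := by
  have hsum := h.add (hasUpperHessianAt_add_mul_norm_sub_sq 0 (-m) 0 x)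
  rw [mul_neg, neg_smul, ← sub_eq_add_neg] at hsum
  exact hsum.mono (fun z => by simp) (by simp)

theorem sub_mul_sq_add_inner_le {m : ℝ} (hm : 0 ≤ m) (x y z ξ : E) :
    4 * m * ⟪x, ξ⟫ - m * ‖y - x‖ ^ 2 - m * ‖z - x‖ ^ 2 ≤
      2 * m * ⟪y + z, ξ⟫ + 2 * m * ‖ξ‖ ^ 2 - m / 2 * ‖y - z‖ ^ 2 := by
  obtain ⟨a, rfl⟩ : ∃ a, y = x + a := ⟨y - x, by simp⟩
  obtain ⟨b, rfl⟩ : ∃ b, z = x + b := ⟨z - x, by simp⟩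
  have hsq := mul_nonneg hm (sq_nonneg ‖a + b + (2 : ℝ) • ξ‖)
  simp only [norm_add_sq_real, norm_sub_sq_real, inner_add_left, add_sub_cancel_left,
    add_sub_add_left_eq_sub, real_inner_smul_right, norm_smul, Real.norm_ofNat] at hsq ⊢
  linarith

theorem exists_radius_inner_le (hK : IsCompact K) {m ε : ℝ} (hm : 0 ≤ m) (hε : 0 < ε) :
    ∃ r > 0, ∀ ξ ∈ ball (0 : E) r, ∀ x ∈ K, ∀ y ∈ K, ∀ z ∈ K,
      2 * m * ⟪y + z, ξ⟫ + 2 * m * ‖ξ‖ ^ 2 - 4 * m * ⟪x, ξ⟫ ≤ ε := by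
  obtain ⟨R, hR, hKR⟩ := hK.isBounded.exists_pos_norm_le
  refine ⟨min 1 (ε / ((8 * R + 2) * m + 1)), by positivity, fun ξ hξ x hx y hy z hz => ?_⟩
  rw [mem_ball_zero_iff, lt_min_iff, lt_div_iff₀ (by positivity)] at hξ
  have hcauchy : ⟪y + z - (2 : ℝ) • x, ξ⟫ ≤ 4 * R * ‖ξ‖ := by
    refine (real_inner_le_norm _ _).trans ?_
    gcongr
    calc ‖y + z - (2 : ℝ) • x‖ ≤ ‖y‖ + ‖z‖ + 2 * ‖x‖ := by
          refine (norm_sub_le _ _).trans ?_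
          rw [norm_smul, Real.norm_ofNat]
          gcongr
          exact norm_add_le y z
      _ ≤ 4 * R := by linarith [hKR x hx, hKR y hy, hKR z hz]
  rw [inner_sub_left, real_inner_smul_left] at hcauchy
  have hsq : ‖ξ‖ ^ 2 ≤ ‖ξ‖ := by nlinarith [norm_nonneg ξ]
  calc 2 * m * ⟪y + z, ξ⟫ + 2 * m * ‖ξ‖ ^ 2 - 4 * m * ⟪x, ξ⟫
      = 2 * m * (⟪y + z, ξ⟫ - 2 * ⟪x, ξ⟫ + ‖ξ‖ ^ 2) := by ring
    _ ≤ 2 * m * (4 * R * ‖ξ‖ + ‖ξ‖) := by gcongr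
    _ ≤ ε := by nlinarith [norm_nonneg ξ, hξ.2]

variable [FiniteDimensional ℝ E]

theorem exists_almost_max_hasUpperHessianAt (hK : IsCompact K) (hne : K.Nonempty)
    (hu : UpperSemicontinuousOn u K) (hw : UpperSemicontinuousOn w K) {m ε : ℝ} (hm : 0 < m)
    (hε : 0 < ε) :
    ∃ y ∈ K, ∃ z ∈ K, (∀ x ∈ K, u x + w x ≤ u y + w z - m / 2 * ‖y - z‖ ^ 2 + ε) ∧
      ∃ A, (y ∈ interior K → HasUpperHessianAt u A y) ∧
        (z ∈ interior K → HasUpperHessianAt w (-A) z) := by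
  obtain ⟨r, hr, hsmall⟩ := exists_radius_inner_le hK hm.le hε
  obtain ⟨L, hL⟩ := exists_lipschitzWith_supConv_add_sq hK hne hu m
  obtain ⟨M, hM⟩ := exists_lipschitzWith_supConv_add_sq hK hne hw m
  obtain ⟨ξ, hξ, x, hmax, A, hA, hA'⟩ := exists_isMaxOn_hasUpperHessianAt
    (convexOn_supConv_add_sq hK hne hu m) hL (convexOn_supConv_add_sq hK hne hw m) hM
    (by positivity : 0 < 2 * m) hr
  have hU := isGreatest_supConv_of_isCompact hK hne hu m
  have hW := isGreatest_supConv_of_isCompact hK hne hw m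
  have hUA : HasUpperHessianAt (supConv K m u) (A - (2 * m) • .id ℝ E) x := hA.of_add_sq
  have hWA : HasUpperHessianAt (supConv K m w) (-(A - (2 * m) • .id ℝ E)) x := by
    convert hA'.of_add_sq (u := supConv K m w) (m := m) using 1
    module
  obtain ⟨y, hy, hyx⟩ := (hU x).1
  obtain ⟨z, hz, hzx⟩ := (hW x).1
  refine ⟨y, hy, z, hz, fun x₀ hx₀ => ?_, _,
    fun hyint => hUA.of_supConv hU hyint hyx, fun hzint => hWA.of_supConv hW hzint hzx⟩
  have hx := hmax (mem_univ x₀)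
  have hux := (hU x₀).2 (mem_image_of_mem _ hx₀)
  have hwx := (hW x₀).2 (mem_image_of_mem _ hx₀)
  simp only [mem_ofPred_eq, ← hyx, ← hzx, norm_sub_sq_real _ ξ, sub_self, norm_zero] at hx hux hwx
  linarith [hsmall ξ hξ x₀ hx₀ y hy z hz, sub_mul_sq_add_inner_le hm.le x y z ξ]

theorem exists_interior_hasUpperHessianAt (hK : IsCompact K)
    (hu : UpperSemicontinuousOn u K) (hw : UpperSemicontinuousOn w K)
    (hbd : ∀ x ∈ frontier K, u x + w x ≤ 0) {x₀ : E} (hx₀ : x₀ ∈ K) (hpos : 0 < u x₀ + w x₀) :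
    ∃ y ∈ interior K, ∃ z ∈ interior K, 0 < u y + w z ∧
      ∃ A, HasUpperHessianAt u A y ∧ HasUpperHessianAt w (-A) z := by
  set M := u x₀ + w x₀
  obtain ⟨m, hm, hint⟩ := exists_penalty_forall_mem_interior hK hu hw (M := M / 2)
    fun x hx => (hbd x hx).trans_lt (half_pos hpos)
  obtain ⟨y, hy, z, hz, hmax, A, hA, hA'⟩ := exists_almost_max_hasUpperHessianAt hK ⟨x₀, hx₀⟩ hu hw
    (by positivity : 0 < 2 * m) (half_pos hpos)
  have hyz : M / 2 + m * dist y z ^ 2 ≤ u y + w z := by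
    rw [dist_eq_norm]
    linarith [hmax x₀ hx₀]
  obtain ⟨hyint, hzint⟩ := hint y hy z hz hyz
  have hsum : 0 < u y + w z := lt_of_lt_of_le (by positivity) hyz
  exact ⟨y, hyint, z, hzint, hsum, A, hA hyint, hA' hzint⟩

/- Perturbing `u` by a small multiple of `‖x‖² - R²`, which is nonpositive on `K`, makes the pair of
Hessians strict. -/
theorem exists_interior_hasUpperHessianAt_strict (hK : IsCompact K)
    (hu : UpperSemicontinuousOn u K) (hw : UpperSemicontinuousOn w K)
    (hbd : ∀ x ∈ frontier K, u x + w x ≤ 0) {x₀ : E} (hx₀ : x₀ ∈ K) (hpos : 0 < u x₀ + w x₀) :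
    ∃ y ∈ interior K, ∃ z ∈ interior K, 0 < u y + w z ∧
      ∃ A, ∃ δ > (0 : ℝ), HasUpperHessianAt u (A - δ • .id ℝ E) y ∧ HasUpperHessianAt w (-A) z := by
  obtain ⟨R, hR⟩ := hK.isBounded.exists_norm_le
  obtain ⟨δ, hδ, hδR⟩ : ∃ δ > 0, δ * R ^ 2 < u x₀ + w x₀ := by
    refine ⟨(u x₀ + w x₀) / (R ^ 2 + 1), by positivity, ?_⟩
    rw [div_mul_eq_mul_div, div_lt_iff₀ (by positivity)]
    nlinarith
  let u' : E → ℝ := fun x => (u x - δ * R ^ 2) + δ * ‖x‖ ^ 2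
  have hu'u : ∀ x ∈ K, u' x ≤ u x := fun x hx => by
    have : δ * ‖x‖ ^ 2 ≤ δ * R ^ 2 := by gcongr; exact hR x hx
    simp only [u']
    linarith
  have hu' : UpperSemicontinuousOn u' K := by
    have hperturb : Continuous fun x : E => -(δ * R ^ 2) + δ * ‖x‖ ^ 2 := by fun_prop
    simpa only [u', sub_eq_add_neg, add_assoc] using
      hu.add hperturb.continuousOn.upperSemicontinuousOn
  have hbd' : ∀ x ∈ frontier K, u' x + w x ≤ 0 := fun x hx => by
    linarith [hbd x hx, hu'u x (hK.isClosed.frontier_subset hx)]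
  have hpos' : 0 < u' x₀ + w x₀ := by
    have : 0 ≤ δ * ‖x₀‖ ^ 2 := by positivity
    simp only [u']
    linarith
  obtain ⟨y, hy, z, hz, hyz, A, hA, hA'⟩ :=
    exists_interior_hasUpperHessianAt hK hu' hw hbd' hx₀ hpos'
  refine ⟨y, hy, z, hz, by linarith [hu'u y (interior_subset hy)], A, 2 * δ, by positivity, ?_, hA'⟩
  exact hA.of_add_sq.of_le_translate (c := δ * R ^ 2)
    (Eventually.of_forall fun z => by simp) (by simp)

end TheoremOnSums

section QuadraticFunction

variable {E : Type*} [NormedAddCommGroup E] [InnerProductSpace ℝ E]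

/-- The quadratic polynomial centred at `y`, vanishing there, with linear part `⟪c, ·⟫` and
quadratic part `⟪T ·, ·⟫ / 2`; these are the `C²` test functions. -/
def quadraticAt (c : E) (T : E →L[ℝ] E) (y x : E) : ℝ :=
  ⟪c, x - y⟫ + 1 / 2 * ⟪T (x - y), x - y⟫

variable (c : E) (T : E →L[ℝ] E) (y : E)

theorem contDiff_quadraticAt {k : WithTop ℕ∞} : ContDiff ℝ k (quadraticAt c T y) := by
  have hsub : ContDiff ℝ k fun x : E => x - y := by fun_prop
  exact (contDiff_const.inner ℝ hsub).add
    (contDiff_const.mul ((T.contDiff.comp hsub).inner ℝ hsub))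

theorem fderiv_quadraticAt (x : E) : fderiv ℝ (quadraticAt c T y) x =
    innerSL ℝ c + (1 / 2 : ℝ) • (innerSL ℝ (T (x - y)) + (innerSL ℝ (x - y)).comp T) := by
  have hsub : HasFDerivAt (fun x : E => x - y) (.id ℝ E) x := (hasFDerivAt_id x).sub_const y
  have hT : HasFDerivAt (fun x : E => T (x - y)) T x := T.hasFDerivAt.comp x hsub
  refine (((innerSL ℝ c).hasFDerivAt.comp x hsub).add
    ((hT.inner ℝ hsub).const_mul (1 / 2))).fderiv.trans ?_
  ext k
  simp [fderivInnerCLM_apply, real_inner_comm, inner_sub_left, inner_sub_right]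
  ring

theorem iteratedFDeriv_two_quadraticAt (x : E) (v : Fin 2 → E) :
    iteratedFDeriv ℝ 2 (quadraticAt c T y) x v =
      1 / 2 * (⟪v 0, T (v 1)⟫ + ⟪v 1, T (v 0)⟫) := by
  let H : E →L[ℝ] E →L[ℝ] ℝ := (1 / 2 : ℝ) • ((innerSL ℝ).comp T +
    ((ContinuousLinearMap.compL ℝ E E ℝ).flip T).comp (innerSL ℝ))
  have hfderiv : fderiv ℝ (quadraticAt c T y) = fun x => innerSL ℝ c + H (x - y) :=
    funext fun x => fderiv_quadraticAt c T y x
  have hH : HasFDerivAt (fun x => innerSL ℝ c + H (x - y)) H x :=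
    (H.hasFDerivAt.comp x ((hasFDerivAt_id x).sub_const y)).const_add _
  rw [iteratedFDeriv_two_apply, hfderiv, hH.fderiv]
  simp [H, real_inner_comm, mul_add, add_comm]

end QuadraticFunction

section SymmetricMatrices

variable {n : ℕ}

/-- The matrix of the symmetric part of an operator, that is, of the quadratic form
`x ↦ ⟪T x, x⟫`. -/
def symMatrix : (Euc n →L[ℝ] Euc n) →ₗ[ℝ] SymMat n :=
  selfAdjointPart ℝ ∘ₗ
    (Matrix.toEuclideanCLM (n := Fin n) (𝕜 := ℝ)).symm.toAlgEquiv.toLinearMap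

theorem symMatrix_apply (T : Euc n →L[ℝ] Euc n) (i j : Fin n) :
    (symMatrix T : Matrix (Fin n) (Fin n) ℝ) i j =
      1 / 2 * (⟪EuclideanSpace.single i 1, T (EuclideanSpace.single j 1)⟫ +
        ⟪EuclideanSpace.single j 1, T (EuclideanSpace.single i 1)⟫) := by
  obtain ⟨M, rfl⟩ : ∃ M, Matrix.toEuclideanCLM (n := Fin n) (𝕜 := ℝ) M = T :=
    ⟨_, StarAlgEquiv.apply_symm_apply _ T⟩
  simp [symMatrix, Matrix.inner_toEuclideanCLM]

theorem symMatrix_id : symMatrix (.id ℝ (Euc n)) = symOne n := by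
  ext i j
  simp [symMatrix_apply, symOne, Matrix.one_apply, EuclideanSpace.inner_single_left, eq_comm]
  ring

theorem hessMat_quadraticAt (c y x : Euc n) (T : Euc n →L[ℝ] Euc n) :
    hessMat (quadraticAt c T y) x = symMatrix T := by
  ext i j
  rw [symMatrix_apply]
  exact iteratedFDeriv_two_quadraticAt c T y x _

theorem posSemidef_add_smul_symOne {B : SymMat n} {δ : ℝ}
    (hB : ‖Matrix.toEuclideanCLM (n := Fin n) (𝕜 := ℝ) B‖ ≤ δ) :
    ((B + δ • symOne n : SymMat n) : Matrix (Fin n) (Fin n) ℝ).PosSemidef := by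
  refine .of_dotProduct_mulVec_nonneg (B + δ • symOne n).2 fun x => ?_
  let y : Euc n := WithLp.toLp 2 x
  have hBy : |⟪y, Matrix.toEuclideanCLM (n := Fin n) (𝕜 := ℝ) B y⟫| ≤ δ * ‖y‖ ^ 2 :=
    calc _ ≤ ‖y‖ * (δ * ‖y‖) := (abs_real_inner_le_norm _ _).trans
          (by gcongr; exact ContinuousLinearMap.le_of_opNorm_le _ hB y)
      _ = δ * ‖y‖ ^ 2 := by ring
  have hexpand : star x ⬝ᵥ ((B + δ • symOne n : SymMat n) : Matrix (Fin n) (Fin n) ℝ).mulVec x =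
      ⟪y, Matrix.toEuclideanCLM (n := Fin n) (𝕜 := ℝ) B y⟫ + δ * ‖y‖ ^ 2 := by
    rw [Matrix.inner_toEuclideanCLM, EuclideanSpace.real_norm_sq_eq]
    simp [y, symOne, Matrix.add_mulVec, Matrix.smul_mulVec, dotProduct, sq, mul_add,
      Finset.sum_add_distrib, Finset.mul_sum, mul_left_comm]
  linarith [neg_le_of_abs_le hBy]

theorem add_smul_symOne_mem_interior {F : Set (SymMat n)}
    (hF : ∀ A ∈ F, ∀ P : SymMat n, (P : Matrix (Fin n) (Fin n) ℝ).PosSemidef → A + P ∈ F)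
    {A : SymMat n} (hA : A ∈ F) {δ : ℝ} (hδ : 0 < δ) : A + δ • symOne n ∈ interior F := by
  let S : SymMat n → Euc n →L[ℝ] Euc n := fun B => Matrix.toEuclideanCLM (n := Fin n) (𝕜 := ℝ) B
  have hS : Continuous S := (LinearMap.continuous_of_finiteDimensional
    (Matrix.toEuclideanCLM (n := Fin n) (𝕜 := ℝ)).toAlgEquiv.toLinearMap).comp
      continuous_subtype_val
  have hnear : ∀ᶠ B in 𝓝 (A + δ • symOne n), ‖S (B - (A + δ • symOne n))‖ < δ := by
    have : Continuous fun B => ‖S (B - (A + δ • symOne n))‖ := by fun_prop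
    refine (this.tendsto _).eventually_lt_const ?_
    simpa [S] using hδ
  rw [mem_interior_iff_mem_nhds]
  filter_upwards [hnear] with B hB
  have := hF A hA _ (posSemidef_add_smul_symOne hB.le)
  rwa [show A + (B - (A + δ • symOne n) + δ • symOne n) = B by abel] at this

theorem isClosed_dirDual (F : Set (SymMat n)) : IsClosed (dirDual F) :=
  isOpen_interior.isClosed_compl.preimage continuous_neg

end SymmetricMatrices

section TypeF

variable {n : ℕ} {F : Set (SymMat n)} {X : Set (Euc n)} {y : Euc n}

theorem SubaffineOn.lt_of_eventually_le_sub_sq {u : Euc n → EReal} (hu : SubaffineOn X u)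
    (hX : IsOpen X) (hy : y ∈ X) {r η : ℝ} (hη : 0 < η)
    (hle : ∀ᶠ z in 𝓝 y, u z ≤ ((r - η * ‖z - y‖ ^ 2 : ℝ) : EReal)) : u y < r := by
  obtain ⟨ρ, hρ, hball⟩ := nhds_basis_closedBall.eventually_iff.1 (hle.and (hX.mem_nhds hy))
  calc u y ≤ ((r - η * ρ ^ 2 : ℝ) : EReal) := by
        refine hu (closedBall y ρ) (isCompact_closedBall y ρ) (fun z hz => (hball hz).2)
          (AffineMap.const ℝ (Euc n) (r - η * ρ ^ 2)) (fun z hz => ?_) y (mem_closedBall_self hρ.le)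
        have hzρ : ‖z - y‖ = ρ := mem_sphere_iff_norm.1 (frontier_closedBall_subset_sphere hz)
        simpa only [hzρ, AffineMap.const_apply] using (hball (mem_closedBall_iff_norm.2 hzρ.le)).1
    _ < r := EReal.coe_lt_coe_iff.2 (sub_lt_self r (by positivity))

variable {u : Euc n → EReal} {f : Euc n → ℝ} {A : Euc n →L[ℝ] Euc n}

/- Otherwise the quadratic function with Hessian `-(A + δ)`, tangent to `-f`, is of type `F̃`, and
its sum with `u` has a strict maximum at `y`. -/
theorem IsTypeF.symMatrix_add_smul_mem (hu : IsTypeF F X u) (hX : IsOpen X) (hy : y ∈ X)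
    (hA : HasUpperHessianAt f A y) (hle : ∀ᶠ z in 𝓝 y, u z ≤ f z) (heq : u y = f y)
    {δ : ℝ} (hδ : 0 < δ) : symMatrix A + δ • symOne n ∈ F := by
  by_contra hmem
  obtain ⟨p, hp⟩ := hA
  let T : Euc n →L[ℝ] Euc n := -(A + δ • .id ℝ (Euc n))
  have hT : symMatrix T = -(symMatrix A + δ • symOne n) := by
    simp only [T, map_neg, map_add, map_smul, symMatrix_id]
  let q : Euc n → ℝ := quadraticAt (-p) T y
  have hq : IsTypeFC2 (dirDual F) X q := by
    refine ⟨(contDiff_quadraticAt (-p) T y).contDiffOn,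
      fun x _ => ⟨symMatrix T, fun hint => hmem ?_, (hessMat_quadraticAt (-p) y x T).symm⟩⟩
    rw [hT, neg_neg] at hint
    exact interior_subset hint
  have hsum : ∀ᶠ z in 𝓝 y, u z + q z ≤ ((f y - δ / 4 * ‖z - y‖ ^ 2 : ℝ) : EReal) := by
    filter_upwards [hle, hp (δ / 4) (by positivity)] with z huz hfz
    refine (add_le_add_left huz _).trans ?_
    rw [← EReal.coe_add, EReal.coe_le_coe_iff]
    simp only [q, T, quadraticAt, neg_apply, add_apply, smul_apply, ContinuousLinearMap.id_apply,
      inner_neg_left, inner_add_left, real_inner_smul_left, real_inner_self_eq_norm_sq]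
    linarith
  have hlt := (hu q hq).lt_of_eventually_le_sub_sq hX hy (by positivity) hsum
  simp [q, quadraticAt, heq] at hlt

theorem IsTypeF.symMatrix_mem (hu : IsTypeF F X u) (hF : IsClosed F) (hX : IsOpen X) (hy : y ∈ X)
    (hA : HasUpperHessianAt f A y) (hle : ∀ᶠ z in 𝓝 y, u z ≤ f z) (heq : u y = f y) :
    symMatrix A ∈ F := by
  have hlim : Tendsto (fun δ : ℝ => symMatrix A + δ • symOne n) (𝓝[>] 0) (𝓝 (symMatrix A)) := by
    have : Continuous fun δ : ℝ => symMatrix A + δ • symOne n :=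
      continuous_induced_rng.2 (continuous_const.add (continuous_id.smul continuous_const))
    simpa using (this.tendsto 0).mono_left nhdsWithin_le_nhds
  refine hF.mem_of_tendsto hlim ?_
  filter_upwards [self_mem_nhdsWithin] with δ hδ
  exact hu.symMatrix_add_smul_mem hX hy hA hle heq hδ

end TypeF

section Truncation

variable {α : Type*}

/-- The truncation `max u c`, as a real-valued function. It takes the junk value `0` where
`u = ⊤`. -/
def lowerTrunc (c : ℝ) (u : α → EReal) (x : α) : ℝ := (max (u x) c).toReal

variable {c N : ℝ} {u w : α → EReal} {x : α}

theorem coe_lowerTrunc (hu : u x ≠ ⊤) : (lowerTrunc c u x : EReal) = max (u x) c :=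
  EReal.coe_toReal (max_lt hu.lt_top (EReal.coe_lt_top c)).ne
    (lt_max_of_lt_right (EReal.bot_lt_coe c)).ne'

theorem le_coe_lowerTrunc (hu : u x ≠ ⊤) : u x ≤ lowerTrunc c u x :=
  (le_max_left _ _).trans_eq (coe_lowerTrunc hu).symm

theorem lowerTrunc_le (hN : c ≤ N) (hu : u x ≤ N) : lowerTrunc c u x ≤ N := by
  rw [← EReal.coe_le_coe_iff, coe_lowerTrunc (hu.trans_lt (EReal.coe_lt_top N)).ne]
  exact max_le hu (EReal.coe_le_coe_iff.2 hN)

theorem eq_coe_lowerTrunc (hu : u x ≠ ⊤) (hlt : c < lowerTrunc c u x) :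
    u x = lowerTrunc c u x := by
  rw [← EReal.coe_lt_coe_iff, coe_lowerTrunc hu, lt_max_iff, or_iff_left (lt_irrefl _)] at hlt
  rw [coe_lowerTrunc hu, max_eq_left hlt.le]

theorem lowerTrunc_add_pos_iff (hN : 0 ≤ N) (hu : u x ≤ N) (hw : w x ≤ N) :
    0 < lowerTrunc (-N) u x + lowerTrunc (-N) w x ↔ -w x < u x := by
  have hu' : u x ≠ ⊤ := (hu.trans_lt (EReal.coe_lt_top N)).ne
  have hw' : w x ≠ ⊤ := (hw.trans_lt (EReal.coe_lt_top N)).ne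
  refine ⟨fun hpos => ?_, fun hlt => ?_⟩
  · have huN := lowerTrunc_le (c := -N) (by linarith) hu
    have hwN := lowerTrunc_le (c := -N) (by linarith) hw
    rw [eq_coe_lowerTrunc (c := -N) hu' (by linarith),
      eq_coe_lowerTrunc (c := -N) hw' (by linarith), ← EReal.coe_neg, EReal.coe_lt_coe_iff]
    linarith
  · have hchain := calc
      -(lowerTrunc (-N) w x : EReal) ≤ -w x := EReal.neg_le_neg_iff.2 (le_coe_lowerTrunc hw')
      _ < u x := hlt
      _ ≤ lowerTrunc (-N) u x := le_coe_lowerTrunc hu'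
    rw [← EReal.coe_neg, EReal.coe_lt_coe_iff] at hchain
    linarith

variable [TopologicalSpace α] {K : Set α}

theorem upperSemicontinuousOn_lowerTrunc (hu : UpperSemicontinuousOn u K)
    (hfin : ∀ x ∈ K, u x ≠ ⊤) (c : ℝ) : UpperSemicontinuousOn (lowerTrunc c u) K := by
  intro x hx b (hb : lowerTrunc c u x < b)
  rw [← EReal.coe_lt_coe_iff, coe_lowerTrunc (hfin x hx)] at hb
  filter_upwards [hu.sup (upperSemicontinuousOn_const (z := (c : EReal))) x hx b hb,
    self_mem_nhdsWithin] with z hz hzK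
  rwa [← EReal.coe_lt_coe_iff, coe_lowerTrunc (hfin z hzK)]

theorem exists_forall_le_coe_of_isCompact (hu : UpperSemicontinuousOn u K)
    (hK : IsCompact K) (hfin : ∀ x ∈ K, u x ≠ ⊤) : ∃ N : ℝ, ∀ x ∈ K, u x ≤ N := by
  rcases K.eq_empty_or_nonempty with rfl | hne
  · exact ⟨0, fun x hx => hx.elim⟩
  obtain ⟨x, hx, hmax⟩ := hu.exists_isMaxOn hne hK
  exact ⟨(u x).toReal, fun z hz => (hmax hz).trans (EReal.le_coe_toReal (hfin x hx))⟩

end Truncation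

section Majorants

variable {E : Type*} [NormedAddCommGroup E] [InnerProductSpace ℝ E] [FiniteDimensional ℝ E]
  {K : Set E} {u w : E → EReal}

theorem exists_majorants_hasUpperHessianAt (hK : IsCompact K) (hu : UpperSemicontinuousOn u K)
    (hu_fin : ∀ x ∈ K, u x ≠ ⊤) (hw : UpperSemicontinuousOn w K) (hw_fin : ∀ x ∈ K, w x ≠ ⊤)
    (hbd : ∀ x ∈ frontier K, u x ≤ -w x) {x₀ : E} (hx₀ : x₀ ∈ K) (hlt : -w x₀ < u x₀) :
    ∃ f g : E → ℝ, (∀ x ∈ K, u x ≤ f x) ∧ (∀ x ∈ K, w x ≤ g x) ∧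
      ∃ y ∈ interior K, u y = f y ∧ ∃ z ∈ interior K, w z = g z ∧
      ∃ A, ∃ δ > (0 : ℝ), HasUpperHessianAt f (A - δ • .id ℝ E) y ∧ HasUpperHessianAt g (-A) z := by
  obtain ⟨N, hN, huN, hwN⟩ : ∃ N : ℝ, 0 ≤ N ∧ (∀ x ∈ K, u x ≤ N) ∧ ∀ x ∈ K, w x ≤ N := by
    obtain ⟨N₁, hN₁⟩ := exists_forall_le_coe_of_isCompact hu hK hu_fin
    obtain ⟨N₂, hN₂⟩ := exists_forall_le_coe_of_isCompact hw hK hw_fin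
    exact ⟨max 0 (max N₁ N₂), le_max_left _ _,
      fun x hx => (hN₁ x hx).trans (EReal.coe_le_coe_iff.2 (by simp)),
      fun x hx => (hN₂ x hx).trans (EReal.coe_le_coe_iff.2 (by simp))⟩
  have hpos {x : E} (hx : x ∈ K) := lowerTrunc_add_pos_iff hN (huN x hx) (hwN x hx)
  obtain ⟨y, hy, z, hz, hyz, A, δ, hδ, hA, hA'⟩ := exists_interior_hasUpperHessianAt_strict hK
    (upperSemicontinuousOn_lowerTrunc hu hu_fin (-N))
    (upperSemicontinuousOn_lowerTrunc hw hw_fin (-N))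
    (fun x hx => not_lt.1 ((hpos (hK.isClosed.frontier_subset hx)).not.2 (hbd x hx).not_gt)) hx₀
    ((hpos hx₀).2 hlt)
  have hyK := interior_subset hy
  have hzK := interior_subset hz
  have huy : lowerTrunc (-N) u y ≤ N := lowerTrunc_le (by linarith) (huN y hyK)
  have hwz : lowerTrunc (-N) w z ≤ N := lowerTrunc_le (by linarith) (hwN z hzK)
  exact ⟨lowerTrunc (-N) u, lowerTrunc (-N) w, fun x hx => le_coe_lowerTrunc (hu_fin x hx),
    fun x hx => le_coe_lowerTrunc (hw_fin x hx),
    y, hy, eq_coe_lowerTrunc (hu_fin y hyK) (by linarith),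
    z, hz, eq_coe_lowerTrunc (hw_fin z hzK) (by linarith), A, δ, hδ, hA, hA'⟩

end Majorants

/-- Theorem 6.4, the Comparison Principle. -/
theorem comparison_principle {n : ℕ} (F : Set (SymMat n)) (hF : IsDirichletSet F)
    (K : Set (Euc n)) (hK : IsCompact K)
    (u : Euc n → EReal) (hu_usc : UpperSemicontinuousOn u K) (hu_fin : ∀ x ∈ K, u x ≠ ⊤)
    (hu : IsTypeF F (interior K) u)
    (v : Euc n → EReal) (hv_lsc : LowerSemicontinuousOn v K) (hv_fin : ∀ x ∈ K, v x ≠ ⊥)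
    (hv : IsTypeF (dirDual F) (interior K) (fun x => -v x))
    (hbd : ∀ x ∈ frontier K, u x ≤ v x) :
    ∀ x ∈ K, u x ≤ v x := by
  intro x₀ hx₀
  by_contra! hlt
  have hw_usc : UpperSemicontinuousOn (fun x => -v x) K :=
    continuous_neg.comp_lowerSemicontinuousOn_antitone hv_lsc fun _ _ => EReal.neg_le_neg_iff.2
  obtain ⟨f, g, huf, hvg, y, hy, huy, z, hz, hvz, A, δ, hδ, hA, hA'⟩ :=
    exists_majorants_hasUpperHessianAt hK hu_usc hu_fin hw_usc
      (fun x hx => EReal.neg_eq_top_iff.not.2 (hv_fin x hx)) (by simpa only [neg_neg] using hbd) hx₀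
      (by simpa only [neg_neg] using hlt)
  have hnhds {x : Euc n} (hx : x ∈ interior K) : K ∈ 𝓝 x := mem_interior_iff_mem_nhds.1 hx
  have hAF : symMatrix (A - δ • .id ℝ (Euc n)) ∈ F :=
    hu.symMatrix_mem hF.isClosed isOpen_interior hy hA (mem_of_superset (hnhds hy) huf) huy
  have hAdual : symMatrix (-A) ∈ dirDual F :=
    hv.symMatrix_mem (isClosed_dirDual F) isOpen_interior hz hA'
      (mem_of_superset (hnhds hz) hvg) hvz
  refine hAdual ?_
  rw [← map_neg, neg_neg]
  simpa only [map_sub, map_smul, symMatrix_id, sub_add_cancel] using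
    add_smul_symOne_mem_interior hF.add_psd hAF hδ
end
end

section
/- For every Dirichlet set F ⊂ Sym²(ℝⁿ) there exists λ > 0 such that A + λI ∈ P̃ for every A ∈ F, i.e., A + λI is not negative definite for every A ∈ F. Consequently, for every open set X ⊂ ℝⁿ and every function u of type F on X, the function x ↦ u(x) + λ·½|x|² is subaffine on X and hence satisfies the maximum principle on every compact subset of X. -/
open Set Metric Filter MeasureTheory Asymptotics
open scoped Topology BigOperators RealInnerProductSpace

noncomputable section

/-!
A set `F` with `F + P ⊆ F` that omits a matrix `B` omits everything below `B`, in particular `-λI`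
once `-λ` is a lower bound for the spectrum of `B`. If `A ∈ F` had `A + λI < 0`, then `A ≤ -λI`
would put `-λI` into `F`. Moreover `-λI ∉ F` implies that `λI` lies in the dual `F̃`, so `½λ|x|²`,
whose Hessian is `λI`, is an admissible test function in the definition of type `F`.
-/

theorem eventually_atBot_algebraMap_le {A : Type*} [Ring A] [StarRing A] [TopologicalSpace A]
    [PartialOrder A] [StarOrderedRing A] [Algebra ℝ A]
    [ContinuousFunctionalCalculus ℝ A IsSelfAdjoint] [NonnegSpectrumClass ℝ A]
    {a : A} (ha : IsSelfAdjoint a) : ∀ᶠ c : ℝ in atBot, algebraMap ℝ A c ≤ a := by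
  obtain ⟨b, hb⟩ := (ContinuousFunctionalCalculus.isCompact_spectrum (R := ℝ) a).bddBelow
  filter_upwards [eventually_le_atBot b] with c hc
  exact (algebraMap_le_iff_le_spectrum ha).2 fun x hx => hc.trans (hb hx)

section HalfNormSq

variable {E : Type*} [NormedAddCommGroup E] [InnerProductSpace ℝ E]

theorem fderiv_mul_half_norm_sq (c : ℝ) (x : E) :
    fderiv ℝ (fun y : E => c * (1 / 2 * ‖y‖ ^ 2)) x = c • innerSL ℝ x := by
  have h := ((hasStrictFDerivAt_norm_sq x).hasFDerivAt.const_mul (1 / 2)).const_mul c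
  rw [h.fderiv]
  ext y
  simp

theorem iteratedFDeriv_two_mul_half_norm_sq (c : ℝ) (x : E) (m : Fin 2 → E) :
    iteratedFDeriv ℝ 2 (fun y : E => c * (1 / 2 * ‖y‖ ^ 2)) x m = c * ⟪m 0, m 1⟫ := by
  rw [iteratedFDeriv_two_apply, funext (fderiv_mul_half_norm_sq c),
    fderiv_fun_const_smul (innerSL ℝ).differentiableAt, ContinuousLinearMap.fderiv]
  rfl

theorem contDiff_mul_half_norm_sq (c : ℝ) {k : WithTop ℕ∞} :
    ContDiff ℝ k fun y : E => c * (1 / 2 * ‖y‖ ^ 2) :=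
  contDiff_const.mul (contDiff_const.mul (contDiff_norm_sq ℝ))

theorem hessMat_mul_half_norm_sq {n : ℕ} (c : ℝ) (x : Euc n) :
    hessMat (fun y : Euc n => c * (1 / 2 * ‖y‖ ^ 2)) x = c • 1 := by
  ext i j
  rw [hessMat, iteratedFDeriv_two_mul_half_norm_sq]
  simp [EuclideanSpace.inner_single_left, Matrix.one_apply]

end HalfNormSq

section Shift

open scoped MatrixOrder

variable {n : ℕ} {F : Set (SymMat n)} {X : Set (Euc n)} {u : Euc n → EReal}

theorem IsDirichletSet.isUpperSet (hF : IsDirichletSet F) : IsUpperSet F := fun A B hAB hA => by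
  simpa only [add_sub_cancel] using hF.add_psd A hA (B - A) (Matrix.le_iff.1 hAB)

theorem eventually_atTop_neg_smul_symOne_notMem (hF : IsUpperSet F) (hne : F ≠ univ) :
    ∀ᶠ c : ℝ in atTop, -(c • symOne n) ∉ F := by
  obtain ⟨B, hB⟩ := (ne_univ_iff_exists_notMem F).1 hne
  filter_upwards [tendsto_neg_atTop_atBot.eventually (eventually_atBot_algebraMap_le B.2)]
    with c hc
  have hle : -(c • symOne n) ≤ B := Subtype.coe_le_coe.1 <| by
    simpa [symOne, Algebra.algebraMap_eq_smul_one] using hc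
  exact fun hmem => hB (hF hle hmem)

theorem notNegDef_add_of_neg_notMem (hF : IsUpperSet F) {A B : SymMat n} (hA : A ∈ F)
    (hB : -B ∉ F) : NotNegDef (A + B) := by
  intro hneg
  have hsum : 0 ≤ -(A + B) := hneg.posSemidef.nonneg
  have hle : A ≤ -B := by rwa [neg_nonneg, add_comm, ← le_neg_iff_add_nonpos_left] at hsum
  exact hB (hF hle hA)

theorem isTypeFC2_mul_half_norm_sq {c : ℝ} (hc : c • symOne n ∈ F) :
    IsTypeFC2 F X fun x => c * (1 / 2 * ‖x‖ ^ 2) :=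
  ⟨(contDiff_mul_half_norm_sq c).contDiffOn, fun x _ =>
    ⟨c • symOne n, hc, (hessMat_mul_half_norm_sq c x).symm⟩⟩

theorem SubaffineOn.iSup_le_iSup_frontier (hu : SubaffineOn X u) {K : Set (Euc n)}
    (hK : IsCompact K) (hKX : K ⊆ X) : ⨆ x ∈ K, u x ≤ ⨆ x ∈ frontier K, u x := by
  refine EReal.le_of_forall_lt_iff_le.1 fun c hc => iSup₂_le fun x hx => ?_
  have hfrontier : ∀ y ∈ frontier K, u y ≤ c := fun y hy =>
    (le_iSup₂ (f := fun y _ => u y) y hy).trans hc.le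
  exact hu K hK hKX (.const ℝ _ c) hfrontier x hx

theorem exists_shift_into_subaffine_general (hF : IsUpperSet F) (hne : F ≠ univ) :
    ∃ lam : ℝ, 0 < lam ∧ (∀ A ∈ F, NotNegDef (A + lam • symOne n)) ∧
      ∀ (X : Set (Euc n)) (u : Euc n → EReal), IsTypeF F X u →
        SubaffineOn X (fun x => u x + ((lam * (1 / 2 * ‖x‖ ^ 2) : ℝ) : EReal)) ∧
        ∀ K : Set (Euc n), IsCompact K → K ⊆ X →
          ⨆ x ∈ K, (u x + ((lam * (1 / 2 * ‖x‖ ^ 2) : ℝ) : EReal)) ≤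
            ⨆ x ∈ frontier K, (u x + ((lam * (1 / 2 * ‖x‖ ^ 2) : ℝ) : EReal)) := by
  obtain ⟨lam, hlam, hpos⟩ :=
    ((eventually_atTop_neg_smul_symOne_notMem hF hne).and (eventually_gt_atTop 0)).exists
  have hdual : lam • symOne n ∈ dirDual F := fun hmem => hlam (interior_subset hmem)
  refine ⟨lam, hpos, fun A hA => notNegDef_add_of_neg_notMem hF hA hlam, fun X u hu => ?_⟩
  have hsub := hu _ (isTypeFC2_mul_half_norm_sq hdual)
  exact ⟨hsub, fun K => hsub.iSup_le_iSup_frontier⟩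

end Shift

/-- Lemma 6.6: there is `λ > 0` with `F + λI ⊂ P̃`; hence
`u + λ·½|x|²` is subaffine, and so satisfies the maximum principle, for every `u` of
type `F`. -/
theorem exists_shift_into_subaffine {n : ℕ} (F : Set (SymMat n)) (hF : IsDirichletSet F) :
    ∃ lam : ℝ, 0 < lam ∧
      (∀ A ∈ F, ¬ (-((A : Matrix (Fin n) (Fin n) ℝ)
          + lam • (1 : Matrix (Fin n) (Fin n) ℝ))).PosDef) ∧
      ∀ X : Set (Euc n), IsOpen X → ∀ u : Euc n → EReal,
        UpperSemicontinuousOn u X → (∀ x ∈ X, u x ≠ ⊤) → IsTypeF F X u →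
          SubaffineOn X (fun x => u x + ((lam * (1/2 * ‖x‖ ^ 2) : ℝ) : EReal)) ∧
          ∀ K : Set (Euc n), IsCompact K → K ⊆ X →
            ⨆ x ∈ K, (u x + ((lam * (1/2 * ‖x‖ ^ 2) : ℝ) : EReal)) ≤
              ⨆ x ∈ frontier K, (u x + ((lam * (1/2 * ‖x‖ ^ 2) : ℝ) : EReal)) := by
  obtain ⟨lam, hpos, hshift, hsub⟩ := exists_shift_into_subaffine_general hF.isUpperSet hF.ne_univ
  exact ⟨lam, hpos, hshift, fun X _ u _ _ hu => hsub X u hu⟩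
end
end

section
/- Let X ⊂ ℝⁿ be open and u : X → ℝ locally quasiconvex. If for Lebesgue-almost every x ∈ X the function u is twice differentiable at x and its Hessian Hess_x u is not negative definite (has at least one eigenvalue ≥ 0), then u is subaffine on X. -/
open Set Metric Filter MeasureTheory Asymptotics
open scoped Topology BigOperators RealInnerProductSpace

noncomputable section

/-!
A point where `u` is touched from above by a paraboloid with Hessian `-c • 1`, `c > 0`, can only
have a negative definite Hessian, so it suffices to find such points outside every null set. If `u`
violates the comparison with an affine `a` on `K`, then for small `c > 0` the function
`u + c |·|² / 2 - a` has an interior maximum. Jensen's argument applies to `w = u + c |·|² / 4`: for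
all `p` in a small ball, `w - ⟪p, ·⟫` has a local maximum near that point. Quasiconvexity provides
a touching paraboloid from below at each of these maxima, which makes the slope `p` a Lipschitz
function of the maximum point. Since the slopes fill a ball, the maximum points cannot form a null
set.
-/

open scoped NNReal

section NormedSpace

variable {E : Type*} [NormedAddCommGroup E] [NormedSpace ℝ E]

theorem isMinOn_of_convexOn_of_eventually_le_add_sq {s : Set E} {g : E → ℝ} {x : E} {C : ℝ}
    (hg : ConvexOn ℝ s g) (hs : s ∈ 𝓝 x) (hle : ∀ᶠ y in 𝓝 x, g y ≤ g x + C * ‖y - x‖ ^ 2) :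
    IsMinOn g s x := by
  intro z hz
  have reflect : Tendsto (fun t : ℝ => x - t • (z - x)) (𝓝[>] 0) (𝓝 x) :=
    tendsto_nhdsWithin_of_tendsto_nhds <|
      (Continuous.tendsto' (by fun_prop) _ _ (by simp))
  have lower : ∀ᶠ t : ℝ in 𝓝[>] 0, g x - t * (C * ‖z - x‖ ^ 2) ≤ g z := by
    filter_upwards [reflect.eventually (hle.and hs), self_mem_nhdsWithin]
      with t ⟨hle_t, hmem⟩ (ht : 0 < t)
    have combination : (t / (1 + t)) • z + (1 / (1 + t)) • (x - t • (z - x)) = x := by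
      match_scalars <;> field_simp <;> ring
    have convex := hg.2 hz hmem (show 0 ≤ t / (1 + t) by positivity)
      (show 0 ≤ 1 / (1 + t) by positivity) (by field_simp; ring)
    rw [combination, smul_eq_mul, smul_eq_mul, div_mul_eq_mul_div, div_mul_eq_mul_div,
      ← add_div, le_div_iff₀ (by positivity)] at convex
    rw [sub_sub_cancel_left, norm_neg, norm_smul, mul_pow, Real.norm_eq_abs, sq_abs] at hle_t
    refine le_of_mul_le_mul_left ?_ ht
    linarith
  have limit : Tendsto (fun t : ℝ => g x - t * (C * ‖z - x‖ ^ 2)) (𝓝[>] 0) (𝓝 (g x)) :=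
    tendsto_nhdsWithin_of_tendsto_nhds <| (Continuous.tendsto' (by fun_prop) _ _ (by simp))
  exact le_of_tendsto limit lower

theorem addHaar_eq_zero_of_antilipschitzWith_domRestrict [FiniteDimensional ℝ E] [MeasurableSpace E]
    [BorelSpace E] (μ : Measure E) [μ.IsAddHaarMeasure] {s : Set E} {f : E → E} {C : ℝ≥0}
    (hf : AntilipschitzWith C (s.domRestrict f)) (himage : μ (f '' s) = 0) : μ s = 0 := by
  have hausdorff_image : μH[Module.finrank ℝ E] (f '' s) = 0 :=
    Measure.absolutelyContinuous_isAddHaarMeasure _ μ himage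
  have hausdorff_subtype : μH[Module.finrank ℝ E] (univ : Set s) = 0 := by
    have bound := hf.le_hausdorffMeasure_image (Nat.cast_nonneg (Module.finrank ℝ E)) univ
    rwa [image_univ, Set.range_domRestrict, hausdorff_image, mul_zero, nonpos_iff_eq_zero] at bound
  apply Measure.absolutelyContinuous_isAddHaarMeasure μ μH[Module.finrank ℝ E]
  rwa [← isometry_subtype_coe.hausdorffMeasure_image (.inl (Nat.cast_nonneg _)), image_univ,
    Subtype.range_coe] at hausdorff_subtype

end NormedSpace

section InnerProductSpace

variable {E : Type*} [NormedAddCommGroup E] [InnerProductSpace ℝ E]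
  {u : E → ℝ} {s : Set E} {x x' x₀ p p' p₀ : E} {c d lam r : ℝ}

/-- `u` is quasiconvex near `x`: adding a large multiple of `|·|² / 2` makes it convex on a
neighborhood. The constant may depend on `x`. -/
def QuasiconvexAt (u : E → ℝ) (x : E) : Prop :=
  ∃ lam > 0, ∃ s ∈ 𝓝 x, ConvexOn ℝ s fun y => u y + lam * (1 / 2 * ‖y‖ ^ 2)

/-- `x` is an upper contact point of `u` with opening `c`: near `x` the function `u` lies below a
paraboloid with Hessian `-c • 1` that touches it at `x`. Centering the paraboloid at the origin
rather than at `x` changes only the slope `p`. -/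
def IsUpperContactPt (c : ℝ) (u : E → ℝ) (x : E) : Prop :=
  ∃ p : E, IsLocalMax (fun y => u y + c * (1 / 2 * ‖y‖ ^ 2) - ⟪p, y⟫) x

theorem isUpperContactPt_add_sq :
    IsUpperContactPt c (fun y => u y + d * (1 / 2 * ‖y‖ ^ 2)) x ↔ IsUpperContactPt (c + d) u x := by
  simp only [IsUpperContactPt, add_mul, add_right_comm, add_assoc]

theorem QuasiconvexAt.add_sq (hu : QuasiconvexAt u x) (hc : 0 ≤ c) :
    QuasiconvexAt (fun y => u y + c * (1 / 2 * ‖y‖ ^ 2)) x := by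
  obtain ⟨lam, hlam, s, hs, hconv⟩ := hu
  have convexOn_sq : ConvexOn ℝ s fun y : E => c * (1 / 2 * ‖y‖ ^ 2) :=
    (((convexOn_norm hconv.1).pow (fun _ _ => norm_nonneg _) 2).smul one_half_pos.le).smul hc
  refine ⟨lam, hlam, s, hs, (hconv.add convexOn_sq).congr fun y _ => ?_⟩
  simp only [Pi.add_apply, add_right_comm]

theorem QuasiconvexAt.eventually (hu : QuasiconvexAt u x) :
    ∀ᶠ y in 𝓝 x, QuasiconvexAt u y := by
  obtain ⟨lam, hlam, s, hs, hconv⟩ := hu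
  exact (eventually_mem_nhds_iff.2 hs).mono fun y hy => ⟨lam, hlam, s, hy, hconv⟩

theorem QuasiconvexAt.continuousAt [FiniteDimensional ℝ E] (hu : QuasiconvexAt u x) :
    ContinuousAt u x := by
  obtain ⟨lam, -, s, hs, hconv⟩ := hu
  have hcont := hconv.continuousOn_interior.continuousAt (interior_mem_nhds.2 hs)
  have hsub : ContinuousAt
      (fun y => u y + lam * (1 / 2 * ‖y‖ ^ 2) - lam * (1 / 2 * ‖y‖ ^ 2)) x :=
    hcont.sub (by fun_prop)
  simpa only [add_sub_cancel_right] using hsub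

theorem norm_sq_eq_add_inner_sub (x y : E) :
    ‖y‖ ^ 2 = ‖x‖ ^ 2 + 2 * ⟪x, y - x⟫ + ‖y - x‖ ^ 2 := by
  rw [← norm_add_sq_real, add_sub_cancel]

theorem paraboloid_le_of_isMaxOn_sub_inner
    (hconv : ConvexOn ℝ s fun y => u y + lam * (1 / 2 * ‖y‖ ^ 2)) (hs : s ∈ 𝓝 x)
    (hmax : IsMaxOn (fun y => u y - ⟪p, y⟫) s x) {z : E} (hz : z ∈ s) :
    u x + ⟪p, z - x⟫ - lam * (1 / 2 * ‖z - x‖ ^ 2) ≤ u z := by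
  let g : E → ℝ := fun y => u y + lam * (1 / 2 * ‖y‖ ^ 2) - ⟪p + lam • x, y⟫
  have hg : ConvexOn ℝ s g := hconv.sub ((innerₛₗ ℝ (p + lam • x)).concaveOn hconv.1)
  have expand (y : E) :
      g y - g x = u y - u x - ⟪p, y - x⟫ + lam * (1 / 2 * ‖y - x‖ ^ 2) := by
    simp only [g, norm_sq_eq_add_inner_sub x y, inner_sub_right, inner_add_left,
      real_inner_smul_left]
    ring
  have hmin : IsMinOn g s x := by
    refine isMinOn_of_convexOn_of_eventually_le_add_sq (C := lam / 2) hg hs ?_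
    filter_upwards [hs] with y hy
    have upper : u y - ⟪p, y⟫ ≤ u x - ⟪p, x⟫ := hmax hy
    have := expand y
    rw [inner_sub_right] at this
    linarith
  have nonneg : g x ≤ g z := hmin hz
  linarith [expand z]

-- Compare the paraboloid below `u` at `x` with the hyperplane above `u` at `x'` in the point
-- `x + lam⁻¹ • (p - p')`, where their difference is largest.
theorem norm_slope_sub_sq_le_inner (hlam : 0 < lam)
    (hconv : ConvexOn ℝ s fun y => u y + lam * (1 / 2 * ‖y‖ ^ 2)) (hs : s ∈ 𝓝 x)
    (hx' : x' ∈ s) (hz : x + lam⁻¹ • (p - p') ∈ s)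
    (hmax : IsMaxOn (fun y => u y - ⟪p, y⟫) s x)
    (hmax' : IsMaxOn (fun y => u y - ⟪p', y⟫) s x') :
    ‖p - p'‖ ^ 2 ≤ 2 * lam * ⟪p - p', x' - x⟫ := by
  set q := p - p' with hq
  have below := paraboloid_le_of_isMaxOn_sub_inner hconv hs hmax hz
  have above : u (x + lam⁻¹ • q) - ⟪p', x + lam⁻¹ • q⟫ ≤ u x' - ⟪p', x'⟫ := hmax' hz
  have above_x' : u x' - ⟪p, x'⟫ ≤ u x - ⟪p, x⟫ := hmax hx'
  have slope_gain : lam⁻¹ * ⟪p, q⟫ - lam⁻¹ * ⟪p', q⟫ = lam⁻¹ * ‖q‖ ^ 2 := by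
    rw [← mul_sub, ← inner_sub_left, ← hq, real_inner_self_eq_norm_sq]
  have slope_loss : lam * (1 / 2 * (lam⁻¹ * ‖q‖) ^ 2) = lam⁻¹ * ‖q‖ ^ 2 / 2 := by field_simp
  rw [add_sub_cancel_left, norm_smul, Real.norm_of_nonneg (inv_nonneg.2 hlam.le),
    real_inner_smul_right, slope_loss] at below
  rw [inner_add_right, real_inner_smul_right] at above
  have : lam⁻¹ * ‖q‖ ^ 2 ≤ 2 * ⟪q, x' - x⟫ := by
    rw [hq, inner_sub_left, inner_sub_right, inner_sub_right, ← hq]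
    linarith
  rwa [inv_mul_le_iff₀ hlam, mul_left_comm, ← mul_assoc] at this

theorem norm_slope_sub_le (hlam : 0 < lam)
    (hconv : ConvexOn ℝ s fun y => u y + lam * (1 / 2 * ‖y‖ ^ 2)) (hs : s ∈ 𝓝 x)
    (hx' : x' ∈ s) (hz : x + lam⁻¹ • (p - p') ∈ s)
    (hmax : IsMaxOn (fun y => u y - ⟪p, y⟫) s x)
    (hmax' : IsMaxOn (fun y => u y - ⟪p', y⟫) s x') :
    ‖p - p'‖ ≤ 2 * lam * ‖x - x'‖ := by
  have cauchy_schwarz : ⟪p - p', x' - x⟫ ≤ ‖p - p'‖ * ‖x - x'‖ :=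
    norm_sub_rev x x' ▸ real_inner_le_norm _ _
  have cocoercive := norm_slope_sub_sq_le_inner hlam hconv hs hx' hz hmax hmax'
  rcases (norm_nonneg (p - p')).eq_or_lt with hzero | hpos
  · rw [← hzero]
    positivity
  · refine le_of_mul_le_mul_left ?_ hpos
    calc ‖p - p'‖ * ‖p - p'‖ ≤ 2 * lam * ⟪p - p', x' - x⟫ := sq ‖p - p'‖ ▸ cocoercive
      _ ≤ 2 * lam * (‖p - p'‖ * ‖x - x'‖) := by gcongr
      _ = ‖p - p'‖ * (2 * lam * ‖x - x'‖) := by ring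

theorem half_mul_norm_sub_le_norm_slope_sub (hx₀ : x₀ ∈ s) (hx : x ∈ s)
    (hmax₀ : IsMaxOn (fun y => u y + c * (1 / 2 * ‖y‖ ^ 2) - ⟪p₀, y⟫) s x₀)
    (hmax : IsMaxOn (fun y => u y - ⟪p, y⟫) s x) :
    c / 2 * ‖x - x₀‖ ≤ ‖p - (p₀ - c • x₀)‖ := by
  have at_x : u x + c * (1 / 2 * ‖x‖ ^ 2) - ⟪p₀, x⟫ ≤ u x₀ + c * (1 / 2 * ‖x₀‖ ^ 2) - ⟪p₀, x₀⟫ :=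
    hmax₀ hx
  have at_x₀ : u x₀ - ⟪p, x₀⟫ ≤ u x - ⟪p, x⟫ := hmax hx₀
  rcases (norm_nonneg (x - x₀)).eq_or_lt with hzero | hpos
  · rw [← hzero, mul_zero]
    positivity
  · refine le_of_mul_le_mul_right ?_ hpos
    calc c / 2 * ‖x - x₀‖ * ‖x - x₀‖ ≤ -⟪p - (p₀ - c • x₀), x - x₀⟫ := by
          rw [norm_sq_eq_add_inner_sub x₀ x] at at_x
          simp only [inner_sub_left, inner_sub_right, real_inner_smul_left] at at_x ⊢
          linarith
      _ ≤ ‖p - (p₀ - c • x₀)‖ * ‖x - x₀‖ :=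
        (neg_le_abs _).trans (abs_real_inner_le_norm _ _)

theorem antilipschitzWith_domRestrict_of_isMaxOn {maxPt : E → E} {ρ : ℝ} (hlam : 0 < lam)
    (hr : 0 < r) (hρ : ρ ≤ lam * r / 4)
    (hconv : ConvexOn ℝ (closedBall x₀ r) fun y => u y + lam * (1 / 2 * ‖y‖ ^ 2))
    (hnear : ∀ p ∈ ball p₀ ρ, ‖maxPt p - x₀‖ < r / 2)
    (hmax : ∀ p ∈ ball p₀ ρ, IsMaxOn (fun y => u y - ⟪p, y⟫) (closedBall x₀ r) (maxPt p)) :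
    AntilipschitzWith (2 * lam).toNNReal ((ball p₀ ρ).domRestrict maxPt) := by
  have maxPt_mem_ball {p : E} (hp : p ∈ ball p₀ ρ) : maxPt p ∈ ball x₀ r :=
    mem_ball_iff_norm.2 ((hnear p hp).trans (half_lt_self hr))
  refine AntilipschitzWith.of_le_mul_dist fun ⟨p, hp⟩ ⟨p', hp'⟩ => ?_
  rw [Real.coe_toNNReal _ (by positivity), Subtype.dist_eq, dist_eq_norm, dist_eq_norm]
  refine norm_slope_sub_le hlam hconv (closedBall_mem_nhds_of_mem (maxPt_mem_ball hp))
    (ball_subset_closedBall (maxPt_mem_ball hp')) ?_ (hmax p hp) (hmax p' hp')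
  have close : ‖p - p'‖ ≤ lam * (r / 2) := by
    have := dist_triangle_right p p' p₀
    rw [← dist_eq_norm]
    linarith [mem_ball.1 hp, mem_ball.1 hp']
  rw [mem_closedBall_iff_norm, add_sub_right_comm]
  calc ‖maxPt p - x₀ + lam⁻¹ • (p - p')‖
      ≤ ‖maxPt p - x₀‖ + lam⁻¹ * ‖p - p'‖ := by
        simpa only [norm_smul, Real.norm_of_nonneg (inv_nonneg.2 hlam.le)]
          using norm_add_le (maxPt p - x₀) (lam⁻¹ • (p - p'))
    _ ≤ r / 2 + r / 2 := by gcongr; exacts [(hnear p hp).le, (inv_mul_le_iff₀ hlam).2 close]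
    _ = r := add_halves r

theorem measure_setOf_isUpperContactPt_ne_zero [FiniteDimensional ℝ E] [MeasurableSpace E]
    [BorelSpace E] (μ : Measure E) [μ.IsAddHaarMeasure] (hlam : 0 < lam) (hc : 0 < c) (hr : 0 < r)
    (hconv : ConvexOn ℝ (closedBall x₀ r) fun y => u y + lam * (1 / 2 * ‖y‖ ^ 2))
    (hcont : ContinuousOn u (closedBall x₀ r))
    (hmax₀ : IsMaxOn (fun y => u y + c * (1 / 2 * ‖y‖ ^ 2) - ⟪p₀, y⟫) (closedBall x₀ r) x₀) :
    μ {x ∈ ball x₀ r | IsUpperContactPt 0 u x} ≠ 0 := by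
  have center_mem : x₀ ∈ closedBall x₀ r := mem_closedBall_self hr.le
  have exists_max (p : E) :
      ∃ x ∈ closedBall x₀ r, IsMaxOn (fun y => u y - ⟪p, y⟫) (closedBall x₀ r) x :=
    (isCompact_closedBall x₀ r).exists_isMaxOn ⟨x₀, center_mem⟩ (hcont.sub (by fun_prop))
  choose maxPt maxPt_mem isMaxOn_maxPt using exists_max
  set ρ := min (c * r / 4) (lam * r / 4)
  have hρ : 0 < ρ := by positivity
  set slopes := ball (p₀ - c • x₀) ρ
  have maxPt_near (p : E) (hp : p ∈ slopes) : ‖maxPt p - x₀‖ < r / 2 := by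
    have localized := half_mul_norm_sub_le_norm_slope_sub center_mem (maxPt_mem p) hmax₀
      (isMaxOn_maxPt p)
    have small : ‖p - (p₀ - c • x₀)‖ < c * r / 4 :=
      (mem_ball_iff_norm.1 hp).trans_le (min_le_left _ _)
    refine lt_of_mul_lt_mul_left (a := c / 2) ?_ (by positivity)
    linarith
  have antilipschitz : AntilipschitzWith (2 * lam).toNNReal (slopes.domRestrict maxPt) :=
    antilipschitzWith_domRestrict_of_isMaxOn hlam hr (min_le_right _ _) hconv maxPt_near
      fun p _ => isMaxOn_maxPt p
  have image_subset : maxPt '' slopes ⊆ {x ∈ ball x₀ r | IsUpperContactPt 0 u x} := by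
    rintro _ ⟨p, hp, rfl⟩
    have hball : maxPt p ∈ ball x₀ r :=
      mem_ball_iff_norm.2 ((maxPt_near p hp).trans (half_lt_self hr))
    refine ⟨hball, p, ?_⟩
    simpa only [zero_mul, add_zero]
      using (isMaxOn_maxPt p).isLocalMax (closedBall_mem_nhds_of_mem hball)
  intro hnull
  exact (measure_ball_pos μ _ hρ).ne' <| addHaar_eq_zero_of_antilipschitzWith_domRestrict μ
    antilipschitz (measure_mono_null image_subset hnull)

theorem QuasiconvexAt.frequently_isUpperContactPt_zero [FiniteDimensional ℝ E] [MeasurableSpace E]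
    [BorelSpace E] (μ : Measure E) [μ.IsAddHaarMeasure] (hu : QuasiconvexAt u x₀) (hc : 0 < c)
    (hcontact : IsUpperContactPt c u x₀) :
    ∃ᶠ x in 𝓝 x₀ ⊓ ae μ, IsUpperContactPt 0 u x := by
  intro hnone
  obtain ⟨U, hU, V, hV, hUV⟩ := eventually_inf.1 hnone
  obtain ⟨p₀, hmax₀⟩ := hcontact
  have hcont : ∀ᶠ y in 𝓝 x₀, ContinuousAt u y := hu.eventually.mono fun _ => continuousAt
  obtain ⟨lam, hlam, s, hs, hconv⟩ := hu
  obtain ⟨r, hr, hball⟩ := nhds_basis_closedBall.eventually_iff.1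
    (hcont.and (hmax₀.and (inter_mem hs hU)))
  refine measure_setOf_isUpperContactPt_ne_zero μ hlam hc hr
    (hconv.subset (fun y hy => (hball hy).2.2.1) (convex_closedBall x₀ r))
    (fun y hy => (hball hy).1.continuousWithinAt) (fun y hy => (hball hy).2.1) ?_
  refine measure_mono_null ?_ hV
  rintro x ⟨hx, hcontact⟩ hxV
  exact hUV x ⟨(hball (ball_subset_closedBall hx)).2.2.2, hxV⟩ hcontact

theorem QuasiconvexAt.frequently_isUpperContactPt [FiniteDimensional ℝ E] [MeasurableSpace E]
    [BorelSpace E] (μ : Measure E) [μ.IsAddHaarMeasure] (hu : QuasiconvexAt u x₀)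
    (hcontact : IsUpperContactPt c u x₀) (hd : 0 ≤ d) (hdc : d < c) :
    ∃ᶠ x in 𝓝 x₀ ⊓ ae μ, IsUpperContactPt d u x := by
  rw [← sub_add_cancel c d, ← isUpperContactPt_add_sq] at hcontact
  simpa only [isUpperContactPt_add_sq, zero_add]
    using (hu.add_sq hd).frequently_isUpperContactPt_zero μ (sub_pos.2 hdc) hcontact

theorem exists_affineMap_eq_inner_add_const [FiniteDimensional ℝ E] (a : E →ᵃ[ℝ] ℝ) :
    ∃ (p : E) (b : ℝ), ∀ y, a y = ⟪p, y⟫ + b := by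
  refine ⟨(InnerProductSpace.toDual ℝ E).symm (LinearMap.toContinuousLinearMap a.linear), a 0,
    fun y => ?_⟩
  rw [InnerProductSpace.toDual_symm_apply]
  exact congrFun a.decomp y

theorem exists_isUpperContactPt_mem_interior [FiniteDimensional ℝ E] {K : Set E} {x₁ : E}
    (hK : IsCompact K) (hu : UpperSemicontinuousOn u K) (a : E →ᵃ[ℝ] ℝ)
    (hfrontier : ∀ x ∈ frontier K, u x ≤ a x) (hx₁ : x₁ ∈ K) (hlt : a x₁ < u x₁) :
    ∃ c > 0, ∃ x ∈ interior K, IsUpperContactPt c u x := by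
  obtain ⟨M, hM⟩ := hK.isBounded.exists_norm_le
  obtain ⟨c, hc, hcM⟩ : ∃ c > 0, c * (1 / 2 * M ^ 2) < u x₁ - a x₁ :=
    exists_pos_mul_lt (sub_pos.2 hlt) _ |>.imp fun c h => ⟨h.1, mul_comm c _ ▸ h.2⟩
  have hperturb : ContinuousOn (fun y => c * (1 / 2 * ‖y‖ ^ 2) - a y) K :=
    .sub (by fun_prop) a.continuous_of_finiteDimensional.continuousOn
  obtain ⟨x, hx, hmax⟩ := (hu.add hperturb.upperSemicontinuousOn).exists_isMaxOn ⟨x₁, hx₁⟩ hK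
  have hinterior : x ∈ interior K := by
    by_contra hnot
    have boundary : u x ≤ a x := hfrontier x ⟨subset_closure hx, hnot⟩
    have value_le : u x₁ + (c * (1 / 2 * ‖x₁‖ ^ 2) - a x₁) ≤ u x + (c * (1 / 2 * ‖x‖ ^ 2) - a x) :=
      hmax hx₁
    have perturb_le : c * (1 / 2 * ‖x‖ ^ 2) ≤ c * (1 / 2 * M ^ 2) := by gcongr; exact hM x hx
    have perturb_nonneg : 0 ≤ c * (1 / 2 * ‖x₁‖ ^ 2) := by positivity
    linarith
  obtain ⟨p, b, ha⟩ := exists_affineMap_eq_inner_add_const a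
  refine ⟨c, hc, x, hinterior, p, ?_⟩
  filter_upwards [hmax.isLocalMax (mem_interior_iff_mem_nhds.1 hinterior)] with y hy
  simp only [ha] at hy
  linarith

theorem quasiconvex_ae_subaffine_general [FiniteDimensional ℝ E] [MeasurableSpace E] [BorelSpace E]
    (μ : Measure E) [μ.IsAddHaarMeasure] {X : Set E} (hu : ∀ x ∈ X, QuasiconvexAt u x)
    (hae : ∀ᵐ x ∂μ, x ∈ X → ∀ c > 0, ¬ IsUpperContactPt c u x) {K : Set E} (hK : IsCompact K)
    (hKX : K ⊆ X) (a : E →ᵃ[ℝ] ℝ) (hfrontier : ∀ x ∈ frontier K, u x ≤ a x) :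
    ∀ x ∈ K, u x ≤ a x := by
  intro x₁ hx₁
  by_contra! hlt
  have hcont : ContinuousOn u K := fun x hx => (hu x (hKX hx)).continuousAt.continuousWithinAt
  obtain ⟨c, hc, x₀, hx₀, hcontact⟩ :=
    exists_isUpperContactPt_mem_interior hK hcont.upperSemicontinuousOn a hfrontier hx₁ hlt
  have hfrequently : ∃ᶠ x in 𝓝 x₀ ⊓ ae μ, IsUpperContactPt (c / 2) u x :=
    (hu x₀ (hKX (interior_subset hx₀))).frequently_isUpperContactPt μ hcontact
      (half_pos hc).le (half_lt_self hc)
  have hX : ∀ᶠ x in 𝓝 x₀, x ∈ X :=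
    mem_of_superset (mem_interior_iff_mem_nhds.1 hx₀) hKX
  obtain ⟨x, hx, hxX, hnot⟩ := (hfrequently.and_eventually
    ((hX.filter_mono inf_le_left).and (hae.filter_mono inf_le_right))).exists
  exact hnot hxX (c / 2) (half_pos hc) hx

theorem IsUpperContactPt.second_difference_le (h : IsUpperContactPt c u x) (v : E) :
    ∀ᶠ t : ℝ in 𝓝 0, u (x + t • v) + u (x - t • v) - 2 * u x ≤ t ^ 2 * (-c * ‖v‖ ^ 2) := by
  obtain ⟨p, hmax⟩ := h
  have forward : Tendsto (fun t : ℝ => x + t • v) (𝓝 0) (𝓝 x) :=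
    Continuous.tendsto' (by fun_prop) _ _ (by simp)
  have backward : Tendsto (fun t : ℝ => x - t • v) (𝓝 0) (𝓝 x) :=
    Continuous.tendsto' (by fun_prop) _ _ (by simp)
  filter_upwards [forward.eventually hmax, backward.eventually hmax] with t hplus hminus
  rw [norm_add_sq_real, inner_add_right] at hplus
  rw [norm_sub_sq_real, inner_sub_right] at hminus
  rw [norm_smul, mul_pow, Real.norm_eq_abs, sq_abs] at hplus hminus
  linarith

end InnerProductSpace

section Hessian

variable {n : ℕ} {u : Euc n → ℝ} {x : Euc n} {c : ℝ} {A : Matrix (Fin n) (Fin n) ℝ}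

theorem bilin_smul_smul (A : Matrix (Fin n) (Fin n) ℝ) (t : ℝ) (v w : Euc n) :
    bilin A (t • v) (t • w) = t ^ 2 * bilin A v w := by
  simp only [bilin, Finset.mul_sum, PiLp.smul_apply, smul_eq_mul]
  refine Finset.sum_congr rfl fun i _ => Finset.sum_congr rfl fun j _ => ?_
  ring

theorem dotProduct_mulVec_eq_bilin (A : Matrix (Fin n) (Fin n) ℝ) (v : Fin n → ℝ) :
    v ⬝ᵥ A.mulVec v = bilin A (WithLp.toLp 2 v) (WithLp.toLp 2 v) := by
  simp only [bilin, dotProduct, Matrix.mulVec, Finset.mul_sum]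
  refine Finset.sum_congr rfl fun i _ => Finset.sum_congr rfl fun j _ => ?_
  ring

theorem exists_bilin_nonneg_of_not_posDef_neg (hA : A.IsSymm) (hneg : ¬ (-A).PosDef) :
    ∃ v : Euc n, v ≠ 0 ∧ 0 ≤ bilin A v v := by
  contrapose! hneg
  refine .of_dotProduct_mulVec_pos (Matrix.isHermitian_iff_isSymm.2 hA).neg fun v hv => ?_
  rw [star_trivial, Matrix.neg_mulVec, dotProduct_neg, dotProduct_mulVec_eq_bilin, neg_pos]
  exact hneg _ (by simpa using hv)

theorem TwiceDiffWithHessAt.tendsto_second_difference (h : TwiceDiffWithHessAt u x A) (v : Euc n) :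
    Tendsto (fun t : ℝ => (u (x + t • v) + u (x - t • v) - 2 * u x) / t ^ 2) (𝓝[≠] 0)
      (𝓝 (bilin A v v)) := by
  obtain ⟨p, hp⟩ := h
  have remainder (w : Euc n) : (fun t : ℝ => u (x + t • w) - u x - ⟪p, t • w⟫
      - 1 / 2 * bilin A (t • w) (t • w)) =o[𝓝[≠] 0] fun t => t ^ 2 := by
    have hline : Tendsto (fun t : ℝ => t • w) (𝓝[≠] 0) (𝓝 0) :=
      tendsto_nhdsWithin_of_tendsto_nhds (Continuous.tendsto' (by fun_prop) _ _ (zero_smul ℝ w))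
    refine (hp.comp_tendsto hline).trans_isBigO (.of_bound (‖w‖ ^ 2) (.of_forall fun t => ?_))
    simp [norm_smul, mul_pow, mul_comm]
  have hlimit := ((remainder v).add (remainder (-v))).tendsto_div_nhds_zero.add_const (bilin A v v)
  rw [zero_add] at hlimit
  refine hlimit.congr' ?_
  filter_upwards [self_mem_nhdsWithin] with t (ht : t ≠ 0)
  rw [smul_neg, ← sub_eq_add_neg, ← neg_smul, bilin_smul_smul, bilin_smul_smul, neg_smul,
    inner_neg_right]
  field_simp
  ring

theorem IsUpperContactPt.bilin_le (hcontact : IsUpperContactPt c u x)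
    (hA : TwiceDiffWithHessAt u x A) (v : Euc n) : bilin A v v ≤ -c * ‖v‖ ^ 2 := by
  refine le_of_tendsto (hA.tendsto_second_difference v) ?_
  filter_upwards [nhdsWithin_le_nhds (hcontact.second_difference_le v), self_mem_nhdsWithin]
    with t hle (ht : t ≠ 0)
  rwa [div_le_iff₀' (by positivity)]

theorem not_isUpperContactPt_of_not_posDef_neg_hess (hsymm : A.IsSymm)
    (hA : TwiceDiffWithHessAt u x A) (hneg : ¬ (-A).PosDef) (hc : 0 < c) :
    ¬ IsUpperContactPt c u x := by
  intro hcontact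
  obtain ⟨v, hv, hnonneg⟩ := exists_bilin_nonneg_of_not_posDef_neg hsymm hneg
  have hle := hcontact.bilin_le hA v
  have hpos : 0 < c * ‖v‖ ^ 2 := by positivity
  linarith

end Hessian

/-- Theorem 7.3: a locally quasiconvex function whose Hessian is
almost everywhere not negative definite is subaffine. -/
theorem quasiconvex_ae_subaffine {n : ℕ} (X : Set (Euc n)) (hX : IsOpen X)
    (u : Euc n → ℝ) (lam : ℝ) (hlam : 0 < lam)
    (hq : ∀ x ∈ X, ∃ B, IsOpen B ∧ Convex ℝ B ∧ x ∈ B ∧ B ⊆ X ∧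
        ConvexOn ℝ B (fun y => u y + lam * (1/2 * ‖y‖ ^ 2)))
    (hae : ∀ᵐ x ∂(volume : Measure (Euc n)), x ∈ X →
        ∃ A : Matrix (Fin n) (Fin n) ℝ, A.IsSymm ∧ TwiceDiffWithHessAt u x A ∧
          ¬ (-A).PosDef) :
    SubaffineOn X (fun x => (u x : EReal)) := by
  intro K hK hKX a hfrontier x hx
  have hu (y) (hy : y ∈ X) : QuasiconvexAt u y := by
    obtain ⟨B, hB, -, hyB, -, hconv⟩ := hq y hy
    exact ⟨lam, hlam, B, hB.mem_nhds hyB, hconv⟩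
  have hnot : ∀ᵐ y, y ∈ X → ∀ c > 0, ¬ IsUpperContactPt c u y := by
    filter_upwards [hae] with y hy hyX c hc
    obtain ⟨A, hsymm, hA, hneg⟩ := hy hyX
    exact not_isUpperContactPt_of_not_posDef_neg_hess hsymm hA hneg hc
  simp only [EReal.coe_le_coe_iff] at hfrontier ⊢
  exact quasiconvex_ae_subaffine_general volume hu hnot hK hKX a hfrontier x hx
end
end
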